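/- arXiv:2305.17857 — 3 statements merged into one kernel-verified Lean document; each statement's English description precedes it below -/
import Mathlib

section
/- Let C_reg, C_gr ≥ 0 and let ω = Σ_{k≥1} ω_k, where each ω_k : ℝ² → (−∞,0] is smooth and compactly supported, ω_k = 0 for all sufficiently large k, supp ω_k ⊂ {2^{k−1} ≤ |x| ≤ 2^{k+1}}, ‖ω_k‖_{S¹₃} ≤ C_reg, and Σ_{k≥1} q_k ≤ C_gr where q_k := −inf_{θ∈S¹} T(|x|^{−2}ω_k)(0,θ). Assume moreover that for every k ≥ 1 the function θ ↦ T(|x|^{−2}ω_k)(0,θ) is constant on S¹, equal to −q_k. Then there exists σ₀ ≥ 0 depending only on C_reg and C_gr such that for every σ ≥ σ₀ the continuous function u(x+iy) := Eω(x+iy) + σ|y| (x, y ∈ ℝ²) is plurisubharmonic on ℂ², i.e. u(z) ≤ (1/2π)∫_{S¹} u(z + e^{iθ}v) dθ for all z, v ∈ ℂ². -/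
open MeasureTheory Real

noncomputable section

/-- Directional derivative of a function on `ℝ²` in the direction `v`. -/
def pd (v : ℝ × ℝ) (ψ : ℝ × ℝ → ℝ) : ℝ × ℝ → ℝ := fun p => fderiv ℝ ψ p v

/-- The X-ray transform `Tψ(s,θ)`. -/
def xray (ψ : ℝ × ℝ → ℝ) (s θ : ℝ) : ℝ :=
  ∫ t : ℝ, ψ (t * Real.cos θ - s * Real.sin θ, t * Real.sin θ + s * Real.cos θ)

/-- The function `x ↦ |x|⁻² ψ(x)` on `ℝ²`. -/
def invSq (ψ : ℝ × ℝ → ℝ) : ℝ × ℝ → ℝ := fun p => (p.1 ^ 2 + p.2 ^ 2)⁻¹ * ψ p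

/-- `q(ψ) := −inf_{θ ∈ S¹} T(|x|⁻²ψ)(0,θ)`. -/
def qOf (ψ : ℝ × ℝ → ℝ) : ℝ := -(⨅ θ : ℝ, xray (invSq ψ) 0 θ)

/-- The Kohn–Nirenberg norm `‖ψ‖_{S¹₃}` is at most `C`. -/
def KNle (ψ : ℝ × ℝ → ℝ) (C : ℝ) : Prop :=
  ∀ γ₁ γ₂ : ℕ, γ₁ + γ₂ ≤ 3 → ∀ p : ℝ × ℝ,
    |Real.sqrt (1 + p.1 ^ 2 + p.2 ^ 2) ^ ((γ₁ + γ₂ : ℤ) - 1) *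
      (pd (1, 0))^[γ₁] ((pd (0, 1))^[γ₂] ψ) p| ≤ C

/-- The dyadic annulus `{2^{k−1} ≤ |x| ≤ 2^{k+1}}` in `ℝ²`. -/
def annulus (k : ℕ) : Set (ℝ × ℝ) :=
  {p | (2 : ℝ) ^ ((k : ℤ) - 1) ≤ Real.sqrt (p.1 ^ 2 + p.2 ^ 2) ∧
       Real.sqrt (p.1 ^ 2 + p.2 ^ 2) ≤ 2 ^ (k + 1)}

/-- Plurisubharmonicity via the sub-mean value property on complex lines. -/
def Psh (u : ℂ × ℂ → ℝ) : Prop :=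
  ∀ z v : ℂ × ℂ,
    u z ≤ (1 / (2 * π)) * ∫ θ in (0:ℝ)..(2 * π), u (z + Complex.exp (θ * Complex.I) • v)

/-- The function `u(x+iy) = Eω(x+iy) + σ|y|`, where `E` is the extension operator
`Eω(x+iy) = (1/π) ∫_ℝ ω(x+ty)/(1+t²) dt`. -/
def uExt (ω : ℝ × ℝ → ℝ) (σ : ℝ) : ℂ × ℂ → ℝ := fun z =>
  (1 / π) * (∫ t : ℝ, ω (z.1.re + t * z.1.im, z.2.re + t * z.2.im) / (1 + t ^ 2))
    + σ * Real.sqrt (z.1.im ^ 2 + z.2.im ^ 2)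

/-- Differentiation under an interval integral of a jointly `C¹` integrand. -/
theorem hasFDerivAt_intervalIntegral_param {E G : Type*} [NormedAddCommGroup E] [NormedSpace ℝ E]
    [ProperSpace E] [NormedAddCommGroup G] [NormedSpace ℝ G] {Φ : E × ℝ → G}
    (h : ContDiff ℝ 1 Φ) (a b : ℝ) (x₀ : E) :
    HasFDerivAt (fun x => ∫ t in a..b, Φ (x, t))
      (∫ t in a..b, (fderiv ℝ Φ (x₀, t)).comp (ContinuousLinearMap.inl ℝ E ℝ)) x₀ := by
  have hc : Continuous fun p : E × ℝ =>
      (fderiv ℝ Φ p).comp (ContinuousLinearMap.inl ℝ E ℝ) :=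
    (h.continuous_fderiv one_ne_zero).clm_comp continuous_const
  obtain ⟨C, hC⟩ := ((isCompact_closedBall x₀ 1).prod
    (isCompact_uIcc (a := a) (b := b))).exists_bound_of_continuousOn hc.continuousOn
  refine intervalIntegral.hasFDerivAt_integral_of_dominated_of_fderiv_le
    (F := fun x t => Φ (x, t))
    (F' := fun x t => (fderiv ℝ Φ (x, t)).comp (ContinuousLinearMap.inl ℝ E ℝ))
    (bound := fun _ => C) (Metric.closedBall_mem_nhds x₀ one_pos) ?_ ?_ ?_ ?_ ?_ ?_
  · exact .of_forall fun x =>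
      (h.continuous.comp (Continuous.prodMk_right x)).aestronglyMeasurable
  · exact (h.continuous.comp (Continuous.prodMk_right x₀)).intervalIntegrable _ _
  · exact (hc.comp (Continuous.prodMk_right x₀)).aestronglyMeasurable
  · exact .of_forall fun t ht x hx => hC (x, t) ⟨hx, Set.uIoc_subset_uIcc ht⟩
  · exact intervalIntegrable_const
  · refine .of_forall fun t _ x _ => ?_
    exact ((h.differentiable one_ne_zero) (x, t)).hasFDerivAt.comp x (hasFDerivAt_prodMk_left x t)

theorem contDiff_nat_intervalIntegral_param {E : Type} [NormedAddCommGroup E] [NormedSpace ℝ E]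
    [ProperSpace E] (a b : ℝ) (n : ℕ) : ∀ {G : Type} [NormedAddCommGroup G] [NormedSpace ℝ G]
    {Φ : E × ℝ → G}, ContDiff ℝ n Φ → ContDiff ℝ n (fun x => ∫ t in a..b, Φ (x, t)) := by
  induction n with
  | zero =>
    intro G _ _ Φ h
    have h0 : Continuous Φ := h.continuous
    exact contDiff_zero.2 (intervalIntegral.continuous_parametric_intervalIntegral_of_continuous'
      (f := fun x t => Φ (x, t)) h0 a b)
  | succ n ih =>
    intro G _ _ Φ h
    have h1 : ContDiff ℝ 1 Φ := h.of_le (by exact_mod_cast Nat.succ_le_succ (Nat.zero_le n))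
    have hd := hasFDerivAt_intervalIntegral_param h1 a b
    push_cast
    rw [contDiff_succ_iff_hasFDerivAt]
    refine ⟨_, ?_, hd⟩
    have h2 : ContDiff ℝ n (fderiv ℝ Φ) := h.fderiv_right (by push_cast; rfl)
    exact ih (Φ := fun p => (fderiv ℝ Φ p).comp (ContinuousLinearMap.inl ℝ E ℝ))
      (h2.clm_comp contDiff_const)

theorem contDiff_intervalIntegral_param {E G : Type} [NormedAddCommGroup E] [NormedSpace ℝ E]
    [ProperSpace E] [NormedAddCommGroup G] [NormedSpace ℝ G] {Φ : E × ℝ → G}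
    (h : ContDiff ℝ (⊤ : ℕ∞) Φ) (a b : ℝ) :
    ContDiff ℝ (⊤ : ℕ∞) (fun x => ∫ t in a..b, Φ (x, t)) :=
  contDiff_infty.2 fun n => contDiff_nat_intervalIntegral_param a b n (contDiff_infty.1 h n)

/-- One-parameter version, with the derivative of the integrand given explicitly. -/
theorem hasDerivAt_intervalIntegral_param {Φ : ℝ × ℝ → ℝ} (h : ContDiff ℝ (⊤ : ℕ∞) Φ)
    {Φ' : ℝ → ℝ} (a b x : ℝ) (hΦ' : ∀ t, HasDerivAt (fun y => Φ (y, t)) (Φ' t) x) :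
    HasDerivAt (fun x => ∫ t in a..b, Φ (x, t)) (∫ t in a..b, Φ' t) x := by
  have h1 : ContDiff ℝ 1 Φ := h.of_le (by exact_mod_cast le_top)
  have hc : Continuous fun t : ℝ =>
      (fderiv ℝ Φ (x, t)).comp (ContinuousLinearMap.inl ℝ ℝ ℝ) :=
    ((h1.continuous_fderiv one_ne_zero).comp (Continuous.prodMk_right x)).clm_comp continuous_const
  have key := (hasFDerivAt_intervalIntegral_param h1 a b x).hasDerivAt
  rw [ContinuousLinearMap.intervalIntegral_apply (hc.intervalIntegrable _ _)] at key
  have e : (∫ t in a..b, Φ' t)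
      = ∫ t in a..b, ((fderiv ℝ Φ (x, t)).comp (ContinuousLinearMap.inl ℝ ℝ ℝ)) 1 := by
    refine intervalIntegral.integral_congr fun t _ => ?_
    have h2 : HasFDerivAt (fun y => Φ (y, t))
        ((fderiv ℝ Φ (x, t)).comp (ContinuousLinearMap.inl ℝ ℝ ℝ)) x :=
      ((h1.differentiable one_ne_zero) (x, t)).hasFDerivAt.comp x (hasFDerivAt_prodMk_left x t)
    exact (hΦ' t).unique h2.hasDerivAt
  rw [e]
  exact key

theorem contDiff_pd {ψ : ℝ × ℝ → ℝ} (h : ContDiff ℝ (⊤ : ℕ∞) ψ) (v : ℝ × ℝ) :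
    ContDiff ℝ (⊤ : ℕ∞) (pd v ψ) :=
  (h.fderiv_right (by simp)).clm_apply contDiff_const

theorem differentiable_of_contDiff_top {E : Type*} [NormedAddCommGroup E] [NormedSpace ℝ E]
    {ψ : E → ℝ} (h : ContDiff ℝ (⊤ : ℕ∞) ψ) : Differentiable ℝ ψ :=
  h.differentiable (by simp)

theorem pd_add_dir (u v : ℝ × ℝ) (ψ : ℝ × ℝ → ℝ) (p : ℝ × ℝ) :
    pd (u + v) ψ p = pd u ψ p + pd v ψ p := by simp [pd]

theorem pd_smul_dir (c : ℝ) (v : ℝ × ℝ) (ψ : ℝ × ℝ → ℝ) (p : ℝ × ℝ) :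
    pd (c • v) ψ p = c * pd v ψ p := by simp [pd]

theorem pd_comb {φ ψ : ℝ × ℝ → ℝ} (hφ : ContDiff ℝ (⊤ : ℕ∞) φ) (hψ : ContDiff ℝ (⊤ : ℕ∞) ψ)
    (v : ℝ × ℝ) (c d : ℝ) (p : ℝ × ℝ) :
    pd v (fun q => c * φ q + d * ψ q) p = c * pd v φ p + d * pd v ψ p := by
  have h1 := ((differentiable_of_contDiff_top hφ p).hasFDerivAt.const_mul c).add
    ((differentiable_of_contDiff_top hψ p).hasFDerivAt.const_mul d)
  have : fderiv ℝ (fun q => c * φ q + d * ψ q) p = c • fderiv ℝ φ p + d • fderiv ℝ ψ p :=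
    h1.fderiv
  simp [pd, this]

theorem pd_dir_comb (c d : ℝ) (u v : ℝ × ℝ) (ψ : ℝ × ℝ → ℝ) :
    pd (c • u + d • v) ψ = fun p => c * pd u ψ p + d * pd v ψ p := by
  ext p; rw [pd_add_dir, pd_smul_dir, pd_smul_dir]

/-- Second directional derivatives are bilinear. -/
theorem pd_pd_dir_comb {ψ : ℝ × ℝ → ℝ} (hψ : ContDiff ℝ (⊤ : ℕ∞) ψ) (c d : ℝ) (u v p : ℝ × ℝ) :
    pd (c • u + d • v) (pd (c • u + d • v) ψ) p = c ^ 2 * pd u (pd u ψ) p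
      + c * d * (pd u (pd v ψ) p + pd v (pd u ψ) p) + d ^ 2 * pd v (pd v ψ) p := by
  rw [pd_dir_comb c d u v (pd _ ψ), pd_dir_comb c d u v ψ]
  simp only [pd_comb (contDiff_pd hψ u) (contDiff_pd hψ v)]
  ring

theorem pd_pd_comm {ψ : ℝ × ℝ → ℝ} (hψ : ContDiff ℝ (⊤ : ℕ∞) ψ) (u v p : ℝ × ℝ) :
    pd u (pd v ψ) p = pd v (pd u ψ) p := by
  have hs : IsSymmSndFDerivAt ℝ ψ p :=
    (contDiff_infty.1 hψ 2).contDiffAt.isSymmSndFDerivAt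
      (by simp)
  have hd : DifferentiableAt ℝ (fderiv ℝ ψ) p :=
    ((hψ.fderiv_right (m := (⊤ : ℕ∞)) (by simp)).differentiable (by simp)) p
  have key : ∀ a b : ℝ × ℝ, pd a (pd b ψ) p = fderiv ℝ (fderiv ℝ ψ) p a b := by
    intro a b
    have := (hd.hasFDerivAt.clm_apply (hasFDerivAt_const b p)).fderiv
    change fderiv ℝ (fun y => fderiv ℝ ψ y b) p a = _
    simp [this]
  rw [key, key, hs.eq]

/-- Derivative of a smooth function along a curve. -/
theorem hasDerivAt_comp_curve {ψ : ℝ × ℝ → ℝ} (h : ContDiff ℝ (⊤ : ℕ∞) ψ) {γ : ℝ → ℝ × ℝ}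
    {v : ℝ × ℝ} {t : ℝ} (hγ : HasDerivAt γ v t) :
    HasDerivAt (fun s => ψ (γ s)) (pd v ψ (γ t)) t :=
  (differentiable_of_contDiff_top h (γ t)).hasFDerivAt.comp_hasDerivAt t hγ

/-- Computing a directional derivative from the derivative along a line. -/
theorem pd_eq_of_hasDerivAt {ψ : ℝ × ℝ → ℝ} (h : ContDiff ℝ (⊤ : ℕ∞) ψ) {v p : ℝ × ℝ} {D : ℝ}
    (hD : HasDerivAt (fun s : ℝ => ψ (p + s • v)) D 0) : pd v ψ p = D := by
  have hγ : HasDerivAt (fun s : ℝ => p + s • v) v 0 := by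
    simpa using ((hasDerivAt_id (0 : ℝ)).smul_const v).const_add p
  have := hasDerivAt_comp_curve h hγ
  simpa using this.unique hD

theorem pd_intervalIntegral {Φ : (ℝ × ℝ) × ℝ → ℝ} (h : ContDiff ℝ (⊤ : ℕ∞) Φ) (a b : ℝ)
    (v p : ℝ × ℝ) :
    pd v (fun x => ∫ t in a..b, Φ (x, t)) p = ∫ t in a..b, pd v (fun x => Φ (x, t)) p := by
  have h1 : ContDiff ℝ 1 Φ := h.of_le (by exact_mod_cast le_top)
  have hc : Continuous fun t : ℝ =>
      (fderiv ℝ Φ (p, t)).comp (ContinuousLinearMap.inl ℝ (ℝ × ℝ) ℝ) :=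
    ((h1.continuous_fderiv one_ne_zero).comp (Continuous.prodMk_right p)).clm_comp continuous_const
  have e := (hasFDerivAt_intervalIntegral_param h1 a b p).fderiv
  unfold pd
  rw [e, ContinuousLinearMap.intervalIntegral_apply (hc.intervalIntegrable _ _)]
  refine intervalIntegral.integral_congr fun t _ => ?_
  have h2 : HasFDerivAt (fun x => Φ (x, t))
      ((fderiv ℝ Φ (p, t)).comp (ContinuousLinearMap.inl ℝ (ℝ × ℝ) ℝ)) p :=
    ((h1.differentiable one_ne_zero) (p, t)).hasFDerivAt.comp p (hasFDerivAt_prodMk_left p t)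
  simp only [h2.fderiv]

theorem pd_coord (c d : ℝ) (ψ : ℝ × ℝ → ℝ) (p : ℝ × ℝ) :
    pd (c, d) ψ p = c * pd (1, 0) ψ p + d * pd (0, 1) ψ p := by
  have : ((c, d) : ℝ × ℝ) = c • (1, 0) + d • (0, 1) := by simp
  rw [this, pd_dir_comb]

/-- A smooth function which is subharmonic on the closed unit disc satisfies the sub-mean value
inequality on the unit circle. -/
theorem le_circle_integral_of_laplacian_nonneg {F : ℝ × ℝ → ℝ} (hF : ContDiff ℝ (⊤ : ℕ∞) F)
    (hL : ∀ p : ℝ × ℝ, p.1 ^ 2 + p.2 ^ 2 ≤ 1 →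
      0 ≤ pd (1, 0) (pd (1, 0) F) p + pd (0, 1) (pd (0, 1) F) p) :
    2 * π * F (0, 0) ≤ ∫ θ in (0 : ℝ)..2 * π, F (Real.cos θ, Real.sin θ) := by
  have h1 := contDiff_pd hF (1, 0)
  have h2 := contDiff_pd hF (0, 1)
  have h11 := (contDiff_pd h1 (1, 0)).continuous
  have h12 := (contDiff_pd h1 (0, 1)).continuous
  have h21 := (contDiff_pd h2 (1, 0)).continuous
  have h22 := (contDiff_pd h2 (0, 1)).continuous
  set P : ℝ → ℝ → ℝ × ℝ := fun r θ => (r * Real.cos θ, r * Real.sin θ) with hP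
  have hPs : ContDiff ℝ (⊤ : ℕ∞) (fun q : ℝ × ℝ => P q.1 q.2) :=
    (contDiff_fst.mul (Real.contDiff_cos.comp contDiff_snd)).prodMk
      (contDiff_fst.mul (Real.contDiff_sin.comp contDiff_snd))
  have hPc : ∀ r, Continuous (P r) := fun r => by simp only [hP]; fun_prop
  have hPr : ∀ r θ, HasDerivAt (fun r => P r θ) (Real.cos θ, Real.sin θ) r := fun r θ => by
    simpa using ((hasDerivAt_id r).mul_const (Real.cos θ)).prodMk
      ((hasDerivAt_id r).mul_const (Real.sin θ))
  have hPθ : ∀ r θ, HasDerivAt (P r) (r * -Real.sin θ, r * Real.cos θ) θ := fun r θ =>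
    ((Real.hasDerivAt_cos θ).const_mul r).prodMk ((Real.hasDerivAt_sin θ).const_mul r)
  set A : ℝ → ℝ := fun r => ∫ θ in (0 : ℝ)..2 * π, F (P r θ)
  set B : ℝ → ℝ := fun r => ∫ θ in (0 : ℝ)..2 * π, pd (Real.cos θ, Real.sin θ) F (P r θ)
  set L : ℝ → ℝ := fun r => ∫ θ in (0 : ℝ)..2 * π,
    (pd (1, 0) (pd (1, 0) F) (P r θ) + pd (0, 1) (pd (0, 1) F) (P r θ))
  have hA : ∀ r, HasDerivAt A (B r) r := fun r =>
    hasDerivAt_intervalIntegral_param (Φ := fun q => F (P q.1 q.2)) (hF.comp hPs) 0 (2 * π) r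
      fun θ => hasDerivAt_comp_curve hF (hPr r θ)
  have hB : ∀ r, HasDerivAt (fun r => r * B r) (r * L r) r := by
    intro r
    have e : (fun r => r * B r) = fun r => ∫ θ in (0 : ℝ)..2 * π,
        r * (Real.cos θ * pd (1, 0) F (P r θ) + Real.sin θ * pd (0, 1) F (P r θ)) := by
      ext r
      rw [intervalIntegral.integral_const_mul]
      simp only [B, pd_coord (Real.cos _)]
    rw [e]
    have hd := hasDerivAt_intervalIntegral_param
      (Φ := fun q => q.1 * (Real.cos q.2 * pd (1, 0) F (P q.1 q.2)
        + Real.sin q.2 * pd (0, 1) F (P q.1 q.2)))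
      (contDiff_fst.mul (((Real.contDiff_cos.comp contDiff_snd).mul (h1.comp hPs)).add
        ((Real.contDiff_sin.comp contDiff_snd).mul (h2.comp hPs)))) 0 (2 * π) r
      (fun θ => (hasDerivAt_id r).mul
        (((hasDerivAt_comp_curve h1 (hPr r θ)).const_mul (Real.cos θ)).add
          ((hasDerivAt_comp_curve h2 (hPr r θ)).const_mul (Real.sin θ))))
    have hang : ∀ θ, HasDerivAt (fun θ => -Real.sin θ * pd (1, 0) F (P r θ)
        + Real.cos θ * pd (0, 1) F (P r θ))
        (-Real.cos θ * pd (1, 0) F (P r θ)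
          + -Real.sin θ * pd (r * -Real.sin θ, r * Real.cos θ) (pd (1, 0) F) (P r θ)
          + (-Real.sin θ * pd (0, 1) F (P r θ)
          + Real.cos θ * pd (r * -Real.sin θ, r * Real.cos θ) (pd (0, 1) F) (P r θ))) θ :=
      fun θ => (((Real.hasDerivAt_sin θ).neg).mul (hasDerivAt_comp_curve h1 (hPθ r θ))).add
        ((Real.hasDerivAt_cos θ).mul (hasDerivAt_comp_curve h2 (hPθ r θ)))
    have hPcr := hPc r
    have c1 := h1.continuous
    have c2 := h2.continuous
    have hcont : Continuous fun θ => (-Real.cos θ * pd (1, 0) F (P r θ)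
          + -Real.sin θ * pd (r * -Real.sin θ, r * Real.cos θ) (pd (1, 0) F) (P r θ)
          + (-Real.sin θ * pd (0, 1) F (P r θ)
          + Real.cos θ * pd (r * -Real.sin θ, r * Real.cos θ) (pd (0, 1) F) (P r θ))) := by
      simp only [pd_coord (r * _)]
      fun_prop
    have hzero := intervalIntegral.integral_eq_sub_of_hasDerivAt (fun θ _ => hang θ)
      (hcont.intervalIntegrable 0 (2 * π))
    have hz : P r (2 * π) = P r 0 := by simp [hP]
    rw [hz] at hzero
    simp only [Real.sin_two_pi, Real.cos_two_pi, Real.sin_zero, Real.cos_zero, sub_self] at hzero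
    convert hd using 1
    refine Eq.trans ?_ ((congrArg _ hzero).trans (add_zero _))
    rw [← intervalIntegral.integral_add, ← intervalIntegral.integral_const_mul]
    · refine intervalIntegral.integral_congr fun θ _ => ?_
      simp only [pd_coord (r * _), pd_coord (Real.cos _), id]
      have := Real.sin_sq_add_cos_sq θ
      linear_combination (-r * (pd (1, 0) (pd (1, 0) F) (P r θ)
        + pd (0, 1) (pd (0, 1) F) (P r θ))) * this
    · refine Continuous.intervalIntegrable ?_ _ _
      simp only [pd_coord (Real.cos _), id]
      fun_prop
    · exact hcont.intervalIntegrable _ _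
  have hLnn : ∀ r ∈ Set.Icc (0 : ℝ) 1, 0 ≤ L r := by
    intro r hr
    refine intervalIntegral.integral_nonneg (by positivity) fun θ _ => hL _ ?_
    have := Real.sin_sq_add_cos_sq θ
    have h3 : r ^ 2 ≤ 1 := by nlinarith [hr.1, hr.2]
    simp only [hP]
    nlinarith
  have hmonoB : MonotoneOn (fun r => r * B r) (Set.Icc 0 1) := by
    refine monotoneOn_of_deriv_nonneg (convex_Icc 0 1)
      (fun r _ => (hB r).continuousAt.continuousWithinAt)
      (fun r _ => (hB r).differentiableAt.differentiableWithinAt) fun r hr => ?_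
    rw [interior_Icc] at hr
    rw [(hB r).deriv]
    exact mul_nonneg hr.1.le (hLnn r ⟨hr.1.le, hr.2.le⟩)
  have hmonoA : MonotoneOn A (Set.Icc 0 1) := by
    refine monotoneOn_of_deriv_nonneg (convex_Icc 0 1)
      (fun r _ => (hA r).continuousAt.continuousWithinAt)
      (fun r _ => (hA r).differentiableAt.differentiableWithinAt) fun r hr => ?_
    rw [interior_Icc] at hr
    rw [(hA r).deriv]
    have := hmonoB (by simp) (⟨hr.1.le, hr.2.le⟩ : r ∈ Set.Icc (0 : ℝ) 1) hr.1.le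
    simp only [zero_mul] at this
    exact nonneg_of_mul_nonneg_right this hr.1
  have := hmonoA (by simp : (0 : ℝ) ∈ Set.Icc (0 : ℝ) 1) (by simp : (1 : ℝ) ∈ Set.Icc (0 : ℝ) 1)
    zero_le_one
  simpa [A, hP] using this

theorem tsupport_pd_subset (v : ℝ × ℝ) (ψ : ℝ × ℝ → ℝ) : tsupport (pd v ψ) ⊆ tsupport ψ := by
  refine subset_trans (closure_mono fun p hp => ?_) (tsupport_fderiv_subset ℝ (f := ψ))
  exact Function.mem_support.2 fun h => hp (by simp [pd, h])

theorem intervalIntegral_eq_integral_of_eq_zero {f : ℝ → ℝ} {T : ℝ}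
    (h : ∀ t, T ≤ |t| → f t = 0) : ∫ t in (-T)..T, f t = ∫ t, f t := by
  refine intervalIntegral.integral_eq_integral_of_support_subset fun t ht => ?_
  by_contra hn
  refine ht (h t ?_)
  by_contra hlt
  exact hn ⟨(abs_lt.1 (not_le.1 hlt)).1, (abs_lt.1 (not_le.1 hlt)).2.le⟩

/-- If the integrals of `χ` over all lines through the origin equal `W`, so do those of the second
normal derivative of `|x|² χ`. -/
theorem integral_normal_pd_sq_mul {χ : ℝ × ℝ → ℝ} (hχ : ContDiff ℝ (⊤ : ℕ∞) χ) {T W : ℝ}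
    (hT : 0 < T) (hsupp : ∀ p ∈ tsupport χ, p.1 ^ 2 + p.2 ^ 2 < T ^ 2)
    (hW : ∀ θ : ℝ, ∫ t : ℝ, χ (t * Real.cos θ, t * Real.sin θ) = W) (θ : ℝ) :
    ∫ t : ℝ, pd (-Real.sin θ, Real.cos θ) (pd (-Real.sin θ, Real.cos θ)
      (fun p => (p.1 ^ 2 + p.2 ^ 2) * χ p)) (t * Real.cos θ, t * Real.sin θ) = W := by
  have h1 := contDiff_pd hχ (1, 0)
  have h2 := contDiff_pd hχ (0, 1)
  set P : ℝ → ℝ → ℝ × ℝ := fun θ t => (t * Real.cos θ, t * Real.sin θ) with hP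
  have hPs : ContDiff ℝ (⊤ : ℕ∞) (fun q : ℝ × ℝ => P q.1 q.2) :=
    (contDiff_snd.mul (Real.contDiff_cos.comp contDiff_fst)).prodMk
      (contDiff_snd.mul (Real.contDiff_sin.comp contDiff_fst))
  have hPθ : ∀ θ t, HasDerivAt (fun θ => P θ t) (t * -Real.sin θ, t * Real.cos θ) θ := fun θ t =>
    ((Real.hasDerivAt_cos θ).const_mul t).prodMk ((Real.hasDerivAt_sin θ).const_mul t)
  have hPt : ∀ θ t, HasDerivAt (P θ) (Real.cos θ, Real.sin θ) t := fun θ t => by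
    simpa using ((hasDerivAt_id t).mul_const (Real.cos θ)).prodMk
      ((hasDerivAt_id t).mul_const (Real.sin θ))
  have hout : ∀ θ t, T ≤ |t| → P θ t ∉ tsupport χ := fun θ t ht hp => by
    have h3 := hsupp _ hp
    have h4 : T ^ 2 ≤ t ^ 2 := by rw [← sq_abs t]; gcongr
    have := Real.sin_sq_add_cos_sq θ
    simp only [hP] at h3
    nlinarith
  have hz0 : ∀ θ t, T ≤ |t| → χ (P θ t) = 0 := fun θ t ht =>
    image_eq_zero_of_notMem_tsupport (hout θ t ht)
  have hWi : ∀ θ, ∫ t in (-T)..T, χ (P θ t) = W := fun θ => by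
    rw [intervalIntegral_eq_integral_of_eq_zero (hz0 θ)]; exact hW θ
  -- the first angular derivative vanishes
  have hD1 : ∀ θ, ∫ t in (-T)..T, t * (-Real.sin θ * pd (1, 0) χ (P θ t)
      + Real.cos θ * pd (0, 1) χ (P θ t)) = 0 := by
    intro θ
    have hd := hasDerivAt_intervalIntegral_param (Φ := fun q => χ (P q.1 q.2))
      (hχ.comp hPs) (-T) T θ
      fun t => hasDerivAt_comp_curve hχ (hPθ θ t)
    simp only [hWi] at hd
    refine Eq.trans ?_ (hd.unique (hasDerivAt_const θ W))
    refine intervalIntegral.integral_congr fun t _ => ?_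
    simp only [pd_coord (t * _)]
    ring
  set n : ℝ × ℝ := (-Real.sin θ, Real.cos θ) with hn
  set e : ℝ × ℝ := (Real.cos θ, Real.sin θ) with he
  have hc := hχ.continuous
  have hce := (contDiff_pd hχ e).continuous
  have hcnn := (contDiff_pd (contDiff_pd hχ n) n).continuous
  have hPc : Continuous (P θ) := by simp only [hP]; fun_prop
  -- the second angular derivative vanishes
  have hD2 : ∫ t in (-T)..T, (t ^ 2 * pd n (pd n χ) (P θ t) - t * pd e χ (P θ t)) = 0 := by
    have hd := hasDerivAt_intervalIntegral_param
      (Φ := fun q => q.2 * (-Real.sin q.1 * pd (1, 0) χ (P q.1 q.2)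
        + Real.cos q.1 * pd (0, 1) χ (P q.1 q.2)))
      (contDiff_snd.mul (((Real.contDiff_sin.comp contDiff_fst).neg.mul (h1.comp hPs)).add
        ((Real.contDiff_cos.comp contDiff_fst).mul (h2.comp hPs)))) (-T) T θ
      fun t => ((((Real.hasDerivAt_sin θ).neg).mul (hasDerivAt_comp_curve h1 (hPθ θ t))).add
        ((Real.hasDerivAt_cos θ).mul (hasDerivAt_comp_curve h2 (hPθ θ t)))).const_mul t
    simp only [hD1] at hd
    refine Eq.trans ?_ (hd.unique (hasDerivAt_const θ 0))
    refine intervalIntegral.integral_congr fun t _ => ?_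
    have hnn : pd n χ = fun p => -Real.sin θ * pd (1, 0) χ p + Real.cos θ * pd (0, 1) χ p := by
      ext p; exact pd_coord _ _ _ _
    simp only [hnn, pd_comb h1 h2]
    simp only [he, hn, pd_coord (Real.cos _), pd_coord (-Real.sin _), pd_coord (t * _),
      Pi.neg_apply]
    ring
  -- integration by parts along the line
  have hD3 : ∫ t in (-T)..T, (χ (P θ t) + t * pd e χ (P θ t)) = 0 := by
    have hd : ∀ t, HasDerivAt (fun t => t * χ (P θ t)) (χ (P θ t) + t * pd e χ (P θ t)) t :=
      fun t => by simpa using (hasDerivAt_id' t).fun_mul (hasDerivAt_comp_curve hχ (hPt θ t))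
    rw [intervalIntegral.integral_eq_sub_of_hasDerivAt (fun t _ => hd t)
      (Continuous.intervalIntegrable (by fun_prop) _ _), hz0 θ T (le_abs_self T),
      hz0 θ (-T) (by rw [abs_neg]; exact le_abs_self T)]
    simp
  have hψ : ContDiff ℝ (⊤ : ℕ∞) (fun p : ℝ × ℝ => (p.1 ^ 2 + p.2 ^ 2) * χ p) :=
    ((contDiff_fst.pow 2).add (contDiff_snd.pow 2)).mul hχ
  have hline : ∀ t s : ℝ, HasDerivAt (fun s : ℝ => P θ t + s • n) n s := fun t s => by
    simpa using ((hasDerivAt_id s).smul_const n).const_add (P θ t)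
  have hsq : ∀ t s : ℝ, (P θ t + s • n).1 ^ 2 + (P θ t + s • n).2 ^ 2 = t ^ 2 + s ^ 2 := by
    intro t s
    simp only [hP, hn, Prod.fst_add, Prod.snd_add, Prod.smul_fst, Prod.smul_snd, smul_eq_mul]
    have := Real.sin_sq_add_cos_sq θ
    linear_combination (t ^ 2 + s ^ 2) * this
  have hpoly : ∀ t s : ℝ, HasDerivAt (fun s : ℝ => t ^ 2 + s ^ 2) (2 * s) s := fun t s => by
    simpa using (hasDerivAt_pow 2 s).const_add (t ^ 2)
  have hψn : ∀ t s : ℝ, pd n (fun p => (p.1 ^ 2 + p.2 ^ 2) * χ p) (P θ t + s • n)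
      = 2 * s * χ (P θ t + s • n) + (t ^ 2 + s ^ 2) * pd n χ (P θ t + s • n) := by
    intro t s
    have ha := hasDerivAt_comp_curve hψ (hline t s)
    simp only [hsq] at ha
    exact ha.unique ((hpoly t s).mul (hasDerivAt_comp_curve hχ (hline t s)))
  have hψnn : ∀ t : ℝ, pd n (pd n (fun p => (p.1 ^ 2 + p.2 ^ 2) * χ p)) (P θ t)
      = 2 * χ (P θ t) + t ^ 2 * pd n (pd n χ) (P θ t) := by
    intro t
    have ha := hasDerivAt_comp_curve (contDiff_pd hψ n) (hline t 0)
    simp only [hψn] at ha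
    have hb := ((((hasDerivAt_id (0 : ℝ)).const_mul 2).mul
      (hasDerivAt_comp_curve hχ (hline t 0))).add
      ((hpoly t 0).mul (hasDerivAt_comp_curve (contDiff_pd hχ n) (hline t 0))))
    have := ha.unique hb
    simpa using this
  have hfin : ∫ t in (-T)..T, (2 * χ (P θ t) + t ^ 2 * pd n (pd n χ) (P θ t)) = W := by
    have h5 : Continuous fun t => t ^ 2 * pd n (pd n χ) (P θ t) - t * pd e χ (P θ t) := by fun_prop
    have h6 : Continuous fun t => χ (P θ t) + t * pd e χ (P θ t) := by fun_prop
    have h7 : Continuous fun t => χ (P θ t) := by fun_prop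
    have h8 := intervalIntegral.integral_add ((h5.add h6).intervalIntegrable (μ := volume) (-T) T)
      (h7.intervalIntegrable (-T) T)
    simp only [Pi.add_apply] at h8
    rw [intervalIntegral.integral_add (h5.intervalIntegrable _ _) (h6.intervalIntegrable _ _),
      hD2, hD3, hWi θ, zero_add, zero_add] at h8
    rw [← h8]
    exact intervalIntegral.integral_congr fun t _ => by ring
  rw [← hfin, ← intervalIntegral_eq_integral_of_eq_zero]
  · exact intervalIntegral.integral_congr fun t _ => hψnn t
  · intro t ht
    have := hψnn t
    rw [hz0 θ t ht] at this
    refine this.trans ?_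
    rw [image_eq_zero_of_notMem_tsupport (f := pd n (pd n χ)) fun h =>
      hout θ t ht (tsupport_pd_subset _ _ (tsupport_pd_subset _ _ h))]
    simp

theorem sq_bounds_of_mem_annulus {k : ℕ} {p : ℝ × ℝ} (hp : p ∈ annulus k) :
    4 ^ k / 4 ≤ p.1 ^ 2 + p.2 ^ 2 ∧ p.1 ^ 2 + p.2 ^ 2 ≤ (2 ^ (k + 1)) ^ 2 := by
  have h0 : 0 ≤ p.1 ^ 2 + p.2 ^ 2 := by positivity
  have hs := Real.sq_sqrt h0
  constructor
  · have h1 : (2 : ℝ) ^ ((k : ℤ) - 1) = 2 ^ k / 2 := by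
      rw [zpow_sub₀ two_ne_zero, zpow_natCast, zpow_one]
    have h2 := hp.1
    rw [h1] at h2
    have h3 : (4 : ℝ) ^ k / 4 = (2 ^ k / 2) ^ 2 := by
      rw [div_pow, ← pow_mul, mul_comm k 2, pow_mul]; norm_num
    rw [h3, ← hs]
    gcongr
  · rw [← hs]
    have := hp.2
    gcongr

theorem tsupport_invSq_subset (ψ : ℝ × ℝ → ℝ) : tsupport (invSq ψ) ⊆ tsupport ψ :=
  closure_mono fun p hp => Function.mem_support.2 fun h => hp (by simp [invSq, h])

theorem zero_notMem_annulus (k : ℕ) : ((0 : ℝ), (0 : ℝ)) ∉ annulus k := fun h => by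
  have := (sq_bounds_of_mem_annulus h).1
  have h4 : (0 : ℝ) < 4 ^ k / 4 := by positivity
  norm_num at this
  linarith

theorem contDiff_invSq {ψ : ℝ × ℝ → ℝ} (hψ : ContDiff ℝ (⊤ : ℕ∞) ψ)
    (h0 : ((0 : ℝ), (0 : ℝ)) ∉ tsupport ψ) : ContDiff ℝ (⊤ : ℕ∞) (invSq ψ) := by
  rw [contDiff_iff_contDiffAt]
  rintro ⟨x, y⟩
  by_cases hp : x ^ 2 + y ^ 2 = 0
  · have hx : x = 0 := by nlinarith [sq_nonneg x, sq_nonneg y]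
    have hy : y = 0 := by nlinarith [sq_nonneg x, sq_nonneg y]
    subst hx hy
    have : invSq ψ =ᶠ[nhds (0, 0)] fun _ => 0 := by
      filter_upwards [notMem_tsupport_iff_eventuallyEq.1 h0] with p hp
      simp [invSq, hp]
    exact contDiffAt_const.congr_of_eventuallyEq this
  · exact (ContDiffAt.inv (((contDiff_fst.pow 2).add (contDiff_snd.pow 2)).contDiffAt) hp).mul
      hψ.contDiffAt

theorem sq_mul_invSq {ψ : ℝ × ℝ → ℝ} (h0 : ((0 : ℝ), (0 : ℝ)) ∉ tsupport ψ) :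
    (fun p : ℝ × ℝ => (p.1 ^ 2 + p.2 ^ 2) * invSq ψ p) = ψ := by
  ext ⟨x, y⟩
  by_cases hp : x ^ 2 + y ^ 2 = 0
  · have hx : x = 0 := by nlinarith [sq_nonneg x, sq_nonneg y]
    have hy : y = 0 := by nlinarith [sq_nonneg x, sq_nonneg y]
    subst hx hy
    simp [image_eq_zero_of_notMem_tsupport h0]
  · simp only [invSq]
    field_simp

/-- The Kohn–Nirenberg bound controls third derivatives in a unit direction. -/
theorem abs_pd_pd_pd_le {ψ : ℝ × ℝ → ℝ} (hψ : ContDiff ℝ (⊤ : ℕ∞) ψ) {C : ℝ} (hC : KNle ψ C)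
    {a b : ℝ} (hab : a ^ 2 + b ^ 2 = 1) (p : ℝ × ℝ) :
    |pd (a, b) (pd (a, b) (pd (a, b) ψ)) p| * (1 + p.1 ^ 2 + p.2 ^ 2) ≤ 8 * C := by
  have h1 := contDiff_pd hψ (1, 0)
  have h2 := contDiff_pd hψ (0, 1)
  have h11 := contDiff_pd h1 (1, 0)
  have h12 := contDiff_pd h2 (1, 0)
  have h22 := contDiff_pd h2 (0, 1)
  have e1 : pd (a, b) ψ = fun p => a * pd (1, 0) ψ p + b * pd (0, 1) ψ p := by
    ext p; exact pd_coord _ _ _ _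
  have e2 : pd (a, b) (pd (a, b) ψ) = fun p =>
      a ^ 2 * pd (1, 0) (pd (1, 0) ψ) p + 1 * (2 * a * b * pd (1, 0) (pd (0, 1) ψ) p
        + b ^ 2 * pd (0, 1) (pd (0, 1) ψ) p) := by
    ext p
    rw [e1, pd_comb h1 h2, pd_coord a b, pd_coord a b, pd_pd_comm hψ (0, 1) (1, 0)]
    ring
  have h3 : ContDiff ℝ (⊤ : ℕ∞) fun p => 2 * a * b * pd (1, 0) (pd (0, 1) ψ) p
        + b ^ 2 * pd (0, 1) (pd (0, 1) ψ) p :=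
    (contDiff_const.mul h12).add (contDiff_const.mul h22)
  have c1 : pd (0, 1) (pd (1, 0) (pd (1, 0) ψ)) p = pd (1, 0) (pd (1, 0) (pd (0, 1) ψ)) p := by
    rw [pd_pd_comm h1]
    congr 1
    ext q
    exact pd_pd_comm hψ _ _ q
  have c2 : pd (0, 1) (pd (1, 0) (pd (0, 1) ψ)) p = pd (1, 0) (pd (0, 1) (pd (0, 1) ψ)) p :=
    pd_pd_comm h2 _ _ p
  have e3 : pd (a, b) (pd (a, b) (pd (a, b) ψ)) p
      = a ^ 3 * pd (1, 0) (pd (1, 0) (pd (1, 0) ψ)) p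
        + 3 * a ^ 2 * b * pd (1, 0) (pd (1, 0) (pd (0, 1) ψ)) p
        + 3 * a * b ^ 2 * pd (1, 0) (pd (0, 1) (pd (0, 1) ψ)) p
        + b ^ 3 * pd (0, 1) (pd (0, 1) (pd (0, 1) ψ)) p := by
    rw [e2, pd_comb h11 h3, pd_comb h12 h22, pd_coord a b, pd_coord a b, pd_coord a b, c1, c2]
    ring
  have hw : Real.sqrt (1 + p.1 ^ 2 + p.2 ^ 2) ^ (2 : ℤ) = 1 + p.1 ^ 2 + p.2 ^ 2 := by
    rw [zpow_ofNat, Real.sq_sqrt (by positivity)]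
  have hpos : 0 < 1 + p.1 ^ 2 + p.2 ^ 2 := by positivity
  have hk : ∀ γ₁ γ₂ : ℕ, γ₁ + γ₂ = 3 →
      |(1 + p.1 ^ 2 + p.2 ^ 2) * (pd (1, 0))^[γ₁] ((pd (0, 1))^[γ₂] ψ) p| ≤ C := by
    intro γ₁ γ₂ hγ
    have h := hC γ₁ γ₂ hγ.le p
    rwa [show ((γ₁ : ℤ) + γ₂ - 1) = 2 by omega, hw] at h
  have b1 : |(1 + p.1 ^ 2 + p.2 ^ 2) * pd (1, 0) (pd (1, 0) (pd (1, 0) ψ)) p| ≤ C := hk 3 0 rfl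
  have b2 : |(1 + p.1 ^ 2 + p.2 ^ 2) * pd (1, 0) (pd (1, 0) (pd (0, 1) ψ)) p| ≤ C := hk 2 1 rfl
  have b3 : |(1 + p.1 ^ 2 + p.2 ^ 2) * pd (1, 0) (pd (0, 1) (pd (0, 1) ψ)) p| ≤ C := hk 1 2 rfl
  have b4 : |(1 + p.1 ^ 2 + p.2 ^ 2) * pd (0, 1) (pd (0, 1) (pd (0, 1) ψ)) p| ≤ C := hk 0 3 rfl
  have hC0 : 0 ≤ C := (abs_nonneg _).trans b1
  have ha : |a| ≤ 1 := abs_le_one_iff_mul_self_le_one.2 (by nlinarith [sq_nonneg b])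
  have hb : |b| ≤ 1 := abs_le_one_iff_mul_self_le_one.2 (by nlinarith [sq_nonneg a])
  rw [← abs_of_pos hpos, ← abs_mul, e3]
  have hm : ∀ u v : ℝ, |u| ≤ 1 → |v| ≤ C → |u * v| ≤ C := fun u v hu hv => by
    rw [abs_mul]; nlinarith [abs_nonneg u, abs_nonneg v]
  have m1 := hm (a ^ 3) _ (by rw [abs_pow]; exact pow_le_one₀ (abs_nonneg a) ha) b1
  have m2 := hm (a ^ 2 * b) _ (by
    rw [abs_mul, abs_pow]
    exact mul_le_one₀ (pow_le_one₀ (abs_nonneg a) ha) (abs_nonneg b) hb) b2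
  have m3 := hm (a * b ^ 2) _ (by
    rw [abs_mul, abs_pow]
    exact mul_le_one₀ ha (by positivity) (pow_le_one₀ (abs_nonneg b) hb)) b3
  have m4 := hm (b ^ 3) _ (by rw [abs_pow]; exact pow_le_one₀ (abs_nonneg b) hb) b4
  rw [abs_le] at *
  constructor <;> linarith [m1.1, m1.2, m2.1, m2.2, m3.1, m3.2, m4.1, m4.2]

/-- Lower bound for the second `s`-derivative of the X-ray transform of a single shell. -/
theorem neg_le_xray_pd_pd {ψ : ℝ × ℝ → ℝ} (hψ : ContDiff ℝ (⊤ : ℕ∞) ψ) {k : ℕ} {C q : ℝ}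
    (hneg : ∀ p, ψ p ≤ 0) (hsupp : tsupport ψ ⊆ annulus k) (hC : KNle ψ C)
    (hq : ∀ θ : ℝ, xray (invSq ψ) 0 θ = -q) (s θ : ℝ) :
    -q - (if |s| ≤ 2 ^ (k + 1) then 256 * C * (|s| / 2 ^ k) else 0) ≤
      xray (pd (-Real.sin θ, Real.cos θ) (pd (-Real.sin θ, Real.cos θ) ψ)) s θ := by
  set n : ℝ × ℝ := (-Real.sin θ, Real.cos θ) with hn
  have h0 : ((0 : ℝ), (0 : ℝ)) ∉ tsupport ψ := fun h => zero_notMem_annulus k (hsupp h)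
  have hnn := contDiff_pd (contDiff_pd hψ n) n
  have hsub : tsupport (pd n (pd n ψ)) ⊆ annulus k :=
    ((tsupport_pd_subset _ _).trans (tsupport_pd_subset _ _)).trans hsupp
  set L : ℝ → ℝ → ℝ × ℝ := fun s t =>
    (t * Real.cos θ - s * Real.sin θ, t * Real.sin θ + s * Real.cos θ) with hL
  have hLsq : ∀ s t, (L s t).1 ^ 2 + (L s t).2 ^ 2 = t ^ 2 + s ^ 2 := fun s t => by
    simp only [hL]
    linear_combination (t ^ 2 + s ^ 2) * Real.sin_sq_add_cos_sq θ
  change _ ≤ ∫ t, pd n (pd n ψ) (L s t)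
  split_ifs with hs
  · set T : ℝ := 2 ^ (k + 2) with hT
    have hTlt : ((2 : ℝ) ^ (k + 1)) ^ 2 < T ^ 2 := by
      rw [hT]; gcongr <;> norm_num
    have hvan : ∀ s t, T ≤ |t| → pd n (pd n ψ) (L s t) = 0 := by
      intro s t ht
      refine image_eq_zero_of_notMem_tsupport fun h => ?_
      have h1 := (sq_bounds_of_mem_annulus (hsub h)).2
      have h2 : T ^ 2 ≤ t ^ 2 := by rw [← sq_abs t]; gcongr
      rw [hLsq] at h1
      nlinarith [sq_nonneg s]
    have hK0 : ∫ t, pd n (pd n ψ) (L 0 t) = -q := by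
      have := integral_normal_pd_sq_mul (χ := invSq ψ) (contDiff_invSq hψ h0) (T := T) (W := -q)
        (by positivity)
        (fun p hp =>
          (sq_bounds_of_mem_annulus (hsupp (tsupport_invSq_subset ψ hp))).2.trans_lt hTlt)
        (fun θ => by simpa [xray] using hq θ) θ
      rw [sq_mul_invSq h0] at this
      simpa [hL] using this
    have hthird : ∀ p, |pd n (pd n (pd n ψ)) p| ≤ 32 * C / 4 ^ k := by
      intro p
      have hb := abs_pd_pd_pd_le hψ hC (a := -Real.sin θ) (b := Real.cos θ)
        (by simp) p
      have hC0 : 0 ≤ C := by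
        have : 0 ≤ 8 * C := le_trans (by positivity) hb
        linarith
      by_cases hp : p ∈ annulus k
      · rw [le_div_iff₀ (by positivity)]
        have := (sq_bounds_of_mem_annulus hp).1
        have h3 : |pd n (pd n (pd n ψ)) p| * (4 ^ k / 4) ≤ 8 * C :=
          le_trans (by gcongr; linarith) hb
        linarith
      · rw [image_eq_zero_of_notMem_tsupport fun h => hp (hsub (tsupport_pd_subset _ _ h)),
          abs_zero]
        positivity
    have hmv : ∀ t, ‖pd n (pd n ψ) (L s t) - pd n (pd n ψ) (L 0 t)‖ ≤ 32 * C / 4 ^ k * |s| := by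
      intro t
      have hline : ∀ s, HasDerivAt (fun s => L s t) n s := fun s => by
        have := (((hasDerivAt_id s).mul_const (Real.sin θ)).const_sub (t * Real.cos θ)).prodMk
          (((hasDerivAt_id s).mul_const (Real.cos θ)).const_add (t * Real.sin θ))
        simpa using this
      have := convex_univ.norm_image_sub_le_of_norm_hasDerivWithin_le
        (f := fun s => pd n (pd n ψ) (L s t)) (C := 32 * C / 4 ^ k)
        (fun s _ => (hasDerivAt_comp_curve hnn (hline s)).hasDerivWithinAt)
        (fun s _ => hthird _) (Set.mem_univ (0 : ℝ)) (Set.mem_univ s)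
      simpa using this
    have hcont : ∀ s, Continuous fun t => pd n (pd n ψ) (L s t) := fun s =>
      hnn.continuous.comp (by simp only [hL]; fun_prop)
    have hdiff : |(∫ t, pd n (pd n ψ) (L s t)) - ∫ t, pd n (pd n ψ) (L 0 t)|
        ≤ 256 * C * (|s| / 2 ^ k) := by
      rw [← intervalIntegral_eq_integral_of_eq_zero (hvan s),
        ← intervalIntegral_eq_integral_of_eq_zero (hvan 0),
        ← intervalIntegral.integral_sub ((hcont s).intervalIntegrable _ _)
          ((hcont 0).intervalIntegrable _ _)]
      refine (intervalIntegral.norm_integral_le_of_norm_le_const fun t _ => hmv t).trans ?_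
      have hTT : |T - -T| = 8 * 2 ^ k := by
        rw [abs_of_nonneg (by simp [hT])]; rw [hT, pow_add]; ring
      have h4 : (4 : ℝ) ^ k = 2 ^ k * 2 ^ k := by rw [← mul_pow]; norm_num
      rw [hTT, h4]
      apply le_of_eq
      field_simp
      ring
    rw [hK0] at hdiff
    linarith [(abs_le.1 hdiff).1]
  · have hz : ∀ t, pd n (pd n ψ) (L s t) = 0 := by
      intro t
      refine image_eq_zero_of_notMem_tsupport fun h => ?_
      have h1 := (sq_bounds_of_mem_annulus (hsub h)).2
      have h2 : ((2 : ℝ) ^ (k + 1)) ^ 2 < s ^ 2 := by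
        rw [← sq_abs s]; exact pow_lt_pow_left₀ (not_le.1 hs) (by positivity) two_ne_zero
      rw [hLsq] at h1
      nlinarith [sq_nonneg t]
    simp only [hz, integral_zero, sub_zero]
    rw [← hq 0]
    exact integral_nonpos fun t => mul_nonpos_of_nonneg_of_nonpos (by positivity) (hneg _)

/-- Uniform bound for the geometric sums over the shells met by a line at distance `|s|`. -/
theorem sum_shell_le (N : ℕ) : ∀ s : ℝ,
    ∑ k ∈ Finset.range N, (if |s| ≤ 2 ^ (k + 1) then |s| / 2 ^ k else 0) ≤ 4 := by
  induction N with
  | zero => intro s; simp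
  | succ N ih =>
    intro s
    by_cases hs : |s| ≤ 2
    · have h1 : ∀ k ∈ Finset.range (N + 1), (if |s| ≤ 2 ^ (k + 1) then |s| / 2 ^ k else 0)
          ≤ 2 * (1 / 2 : ℝ) ^ k := by
        intro k _
        split_ifs
        · rw [div_pow, one_pow, mul_one_div]; gcongr
        · positivity
      refine (Finset.sum_le_sum h1).trans ?_
      rw [← Finset.mul_sum]
      have := sum_geometric_two_le (N + 1)
      linarith
    · rw [Finset.sum_range_succ']
      have h0 : ¬ |s| ≤ 2 ^ (0 + 1) := by simpa using hs
      rw [if_neg h0, add_zero]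
      refine le_trans (le_of_eq ?_) (ih (s / 2))
      refine Finset.sum_congr rfl fun k _ => ?_
      rw [abs_div, abs_two, pow_succ' (2 : ℝ) (k + 1)]
      have : |s| / 2 ≤ 2 ^ (k + 1) ↔ |s| ≤ 2 * 2 ^ (k + 1) := by
        rw [div_le_iff₀ two_pos, mul_comm]
      simp only [this]
      congr 1
      rw [pow_succ]; field_simp

theorem exists_norm_lt_of_mem_tsupport {ψ : ℝ × ℝ → ℝ} (hs : HasCompactSupport ψ) :
    ∃ D : ℝ, 0 < D ∧ ∀ p ∈ tsupport ψ, ‖p‖ < D := by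
  obtain ⟨D, hD⟩ := hs.isCompact.isBounded.exists_norm_le
  exact ⟨max D 0 + 1, by positivity, fun p hp =>
    ((hD p hp).trans (le_max_left _ _)).trans_lt (lt_add_one _)⟩

theorem hasCompactSupport_pd {ψ : ℝ × ℝ → ℝ} (hs : HasCompactSupport ψ) (v : ℝ × ℝ) :
    HasCompactSupport (pd v ψ) :=
  hs.of_isClosed_subset (isClosed_tsupport _) (tsupport_pd_subset v ψ)

/-- A line leaves a given ball at an explicit time. -/
theorem le_norm_add_smul {x y : ℝ × ℝ} {A D t : ℝ} (hx : ‖x‖ ≤ A) (ht : A + D ≤ |t| * ‖y‖) :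
    D ≤ ‖x + t • y‖ := by
  have h1 : ‖t • y‖ ≤ ‖x + t • y‖ + ‖x‖ := by
    have := norm_sub_le (x + t • y) x
    rwa [add_sub_cancel_left] at this
  rw [norm_smul, Real.norm_eq_abs] at h1
  linarith

theorem hasCompactSupport_comp_line {ψ : ℝ × ℝ → ℝ} (hs : HasCompactSupport ψ) (x : ℝ × ℝ)
    {y : ℝ × ℝ} (hy : y ≠ 0) : HasCompactSupport fun t : ℝ => ψ (x + t • y) := by
  obtain ⟨D, hD0, hD⟩ := exists_norm_lt_of_mem_tsupport hs
  have hy' : 0 < ‖y‖ := norm_pos_iff.2 hy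
  refine HasCompactSupport.intro (isCompact_Icc (a := -((‖x‖ + D) / ‖y‖)) (b := (‖x‖ + D) / ‖y‖))
    fun t ht => image_eq_zero_of_notMem_tsupport fun hp => (hD _ hp).not_ge ?_
  refine le_norm_add_smul le_rfl ?_
  rw [← div_le_iff₀ hy']
  by_contra hlt
  exact ht (abs_le.1 (not_le.1 hlt).le)

theorem integrable_comp_line {ψ : ℝ × ℝ → ℝ} (hc : Continuous ψ) (hs : HasCompactSupport ψ)
    (x : ℝ × ℝ) {y : ℝ × ℝ} (hy : y ≠ 0) : Integrable fun t : ℝ => ψ (x + t • y) :=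
  (hc.comp (by fun_prop : Continuous fun t : ℝ => x + t • y)).integrable_of_hasCompactSupport
    (hasCompactSupport_comp_line hs x hy)

theorem cos_sin_ne_zero (θ : ℝ) : ((Real.cos θ, Real.sin θ) : ℝ × ℝ) ≠ 0 := fun h => by
  have h1 := congrArg Prod.fst h
  have h2 := congrArg Prod.snd h
  simp only [Prod.fst_zero, Prod.snd_zero] at h1 h2
  have := Real.sin_sq_add_cos_sq θ
  rw [h1, h2] at this
  norm_num at this

theorem xray_eq (ψ : ℝ × ℝ → ℝ) (s θ : ℝ) : xray ψ s θ =
    ∫ t : ℝ, ψ (s • (-Real.sin θ, Real.cos θ) + t • (Real.cos θ, Real.sin θ)) := by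
  simp only [xray]
  congr 1
  ext t
  congr 1
  ext <;> simp <;> ring

/-- The second derivative of a finite sum. -/
theorem pd_pd_sum {f : ℕ → ℝ × ℝ → ℝ} (hf : ∀ k, ContDiff ℝ (⊤ : ℕ∞) (f k)) (N : ℕ)
    (v p : ℝ × ℝ) : pd v (pd v fun p => ∑ k ∈ Finset.range N, f k p) p =
      ∑ k ∈ Finset.range N, pd v (pd v (f k)) p := by
  have h1 : ∀ g : ℕ → ℝ × ℝ → ℝ, (∀ k, ContDiff ℝ (⊤ : ℕ∞) (g k)) →
      (pd v fun p => ∑ k ∈ Finset.range N, g k p) =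
        fun p => ∑ k ∈ Finset.range N, pd v (g k) p := by
    intro g hg
    ext p
    simp only [pd]
    rw [fderiv_fun_sum fun k _ => differentiable_of_contDiff_top (hg k) p]
    simp
  rw [h1 f hf, h1 _ fun k => contDiff_pd (hf k) v]

theorem neg_le_xray_sum {f : ℕ → ℝ × ℝ → ℝ} (hf : ∀ k, ContDiff ℝ (⊤ : ℕ∞) (f k))
    (hs : ∀ k, HasCompactSupport (f k)) (hneg : ∀ k p, f k p ≤ 0)
    (hsupp : ∀ k, tsupport (f k) ⊆ annulus (k + 1)) {C G : ℝ} (hC0 : 0 ≤ C)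
    (hC : ∀ k, KNle (f k) C) (hq : ∀ k θ, xray (invSq (f k)) 0 θ = -qOf (f k)) (N : ℕ)
    (hG : ∑ k ∈ Finset.range N, qOf (f k) ≤ G) (s θ : ℝ) :
    -(G + 1024 * C) ≤ xray (pd (-Real.sin θ, Real.cos θ) (pd (-Real.sin θ, Real.cos θ)
      fun p => ∑ k ∈ Finset.range N, f k p)) s θ := by
  set n : ℝ × ℝ := (-Real.sin θ, Real.cos θ) with hn
  have hsum : xray (pd n (pd n fun p => ∑ k ∈ Finset.range N, f k p)) s θ =
      ∑ k ∈ Finset.range N, xray (pd n (pd n (f k))) s θ := by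
    simp only [xray_eq, pd_pd_sum hf]
    exact integral_finsetSum _ fun k _ => integrable_comp_line
      (contDiff_pd (contDiff_pd (hf k) n) n).continuous
      (hasCompactSupport_pd (hasCompactSupport_pd (hs k) n) n) _ (cos_sin_ne_zero θ)
  rw [hsum]
  refine le_trans ?_ (Finset.sum_le_sum fun k _ =>
    neg_le_xray_pd_pd (hf k) (hneg k) (hsupp k) (hC k) (hq k) s θ)
  rw [Finset.sum_sub_distrib, Finset.sum_neg_distrib]
  have h1 := mul_le_mul_of_nonneg_left (sum_shell_le N (s / 2)) (by positivity : 0 ≤ 256 * C)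
  rw [Finset.mul_sum] at h1
  have h2 : ∀ k : ℕ, (if |s| ≤ 2 ^ (k + 1 + 1) then 256 * C * (|s| / 2 ^ (k + 1)) else 0) =
      256 * C * (if |s / 2| ≤ 2 ^ (k + 1) then |s / 2| / 2 ^ k else 0) := by
    intro k
    have h3 : |s / 2| = |s| / 2 := by rw [abs_div]; norm_num
    have h4 : |s| / 2 ≤ 2 ^ (k + 1) ↔ |s| ≤ 2 ^ (k + 1 + 1) := by
      rw [div_le_iff₀ two_pos, pow_succ 2 (k + 1)]
    simp only [h3, h4]
    split_ifs
    · rw [pow_succ]; field_simp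
    · simp
  simp only [h2]
  linarith

theorem integral_pd_line_eq_zero {ψ : ℝ × ℝ → ℝ} (hψ : ContDiff ℝ (⊤ : ℕ∞) ψ)
    (hs : HasCompactSupport ψ) (x : ℝ × ℝ) {y : ℝ × ℝ} (hy : y ≠ 0) :
    ∫ t : ℝ, pd y ψ (x + t • y) = 0 := by
  refine integral_eq_zero_of_hasDerivAt_of_integrable (f := fun t : ℝ => ψ (x + t • y))
    (fun t => hasDerivAt_comp_curve hψ ?_)
    (integrable_comp_line (contDiff_pd hψ y).continuous (hasCompactSupport_pd hs y) x hy)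
    (integrable_comp_line hψ.continuous hs x hy)
  simpa using ((hasDerivAt_id t).smul_const y).const_add x

/-- Second derivatives integrated along a line depend only on the component of the direction normal
to the line. -/
theorem integral_pd_pd_line {ψ : ℝ × ℝ → ℝ} (hψ : ContDiff ℝ (⊤ : ℕ∞) ψ)
    (hs : HasCompactSupport ψ) (x : ℝ × ℝ) {e : ℝ × ℝ} (he : e ≠ 0) (c d : ℝ) (n : ℝ × ℝ) :
    ∫ t : ℝ, pd (c • e + d • n) (pd (c • e + d • n) ψ) (x + t • e) =
      d ^ 2 * ∫ t : ℝ, pd n (pd n ψ) (x + t • e) := by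
  have hi : ∀ u v : ℝ × ℝ, Integrable fun t : ℝ => pd u (pd v ψ) (x + t • e) := fun u v =>
    integrable_comp_line (contDiff_pd (contDiff_pd hψ v) u).continuous
      (hasCompactSupport_pd (hasCompactSupport_pd hs v) u) x he
  have hz : ∀ v : ℝ × ℝ, ∫ t : ℝ, pd e (pd v ψ) (x + t • e) = 0 := fun v =>
    integral_pd_line_eq_zero (contDiff_pd hψ v) (hasCompactSupport_pd hs v) x he
  have h1 : ∀ t : ℝ, pd (c • e + d • n) (pd (c • e + d • n) ψ) (x + t • e) =
      c ^ 2 * pd e (pd e ψ) (x + t • e) + 2 * c * d * pd e (pd n ψ) (x + t • e)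
        + d ^ 2 * pd n (pd n ψ) (x + t • e) := fun t => by
    rw [pd_pd_dir_comb hψ, pd_pd_comm hψ n e]
    ring
  simp only [h1]
  have h2 : Integrable fun t : ℝ =>
      c ^ 2 * pd e (pd e ψ) (x + t • e) + 2 * c * d * pd e (pd n ψ) (x + t • e) :=
    ((hi e e).const_mul _).add ((hi e n).const_mul _)
  rw [integral_add h2 ((hi n n).const_mul _),
    integral_add ((hi e e).const_mul _) ((hi e n).const_mul _), integral_const_mul,
    integral_const_mul, integral_const_mul, hz, hz]
  ring

theorem neg_le_integral_pd_pd {Ω : ℝ × ℝ → ℝ} (hΩ : ContDiff ℝ (⊤ : ℕ∞) Ω)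
    (hs : HasCompactSupport Ω) {C : ℝ} (hC : ∀ s θ : ℝ, -C ≤
      xray (pd (-Real.sin θ, Real.cos θ) (pd (-Real.sin θ, Real.cos θ) Ω)) s θ)
    (x a : ℝ × ℝ) {y : ℝ × ℝ} {r : ℝ} (hr : 0 < r) (hyr : r ^ 2 = y.1 ^ 2 + y.2 ^ 2) :
    -(C * (y.1 * a.2 - y.2 * a.1) ^ 2 / r ^ 3) ≤ ∫ t : ℝ, pd a (pd a Ω) (x + t • y) := by
  obtain ⟨θ, h1, h2⟩ : ∃ θ : ℝ, y.1 = r * Real.cos θ ∧ y.2 = r * Real.sin θ := by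
    have hn : ‖(⟨y.1, y.2⟩ : ℂ)‖ = r := by
      rw [Complex.norm_def, Complex.normSq_mk, ← sq, ← sq, ← hyr, Real.sqrt_sq hr.le]
    refine ⟨Complex.arg ⟨y.1, y.2⟩, ?_, ?_⟩
    · rw [← hn, Complex.norm_mul_cos_arg]
    · rw [← hn, Complex.norm_mul_sin_arg]
  have hcs := Real.sin_sq_add_cos_sq θ
  set e : ℝ × ℝ := (Real.cos θ, Real.sin θ) with he
  set n : ℝ × ℝ := (-Real.sin θ, Real.cos θ) with hn
  have hdec : ∀ w : ℝ × ℝ, w = (w.1 * Real.cos θ + w.2 * Real.sin θ) • e +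
      (w.2 * Real.cos θ - w.1 * Real.sin θ) • n := by
    intro w
    ext
    · simp [he, hn]; linear_combination (-w.1) * hcs
    · simp [he, hn]; linear_combination (-w.2) * hcs
  have hy : y = r • e := by ext <;> simp [he, h1, h2]
  obtain ⟨c, d, hd, ha⟩ : ∃ c d : ℝ, d = a.2 * Real.cos θ - a.1 * Real.sin θ ∧
      a = c • e + d • n := ⟨_, _, rfl, hdec a⟩
  obtain ⟨τ, s, hxs⟩ : ∃ τ s : ℝ, x = τ • e + s • n := ⟨_, _, hdec x⟩
  have hcov : ∀ g : ℝ × ℝ → ℝ, ∫ t : ℝ, g (x + t • y) = r⁻¹ * ∫ t : ℝ, g (s • n + t • e) := by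
    intro g
    have h3 : ∀ t : ℝ, x + t • y = s • n + (τ + t * r) • e := fun t => by
      rw [hxs, hy, add_smul, mul_smul]; abel
    simp only [h3]
    rw [Measure.integral_comp_mul_right (fun t => g (s • n + (τ + t) • e)) r,
      integral_add_left_eq_self (fun t => g (s • n + t • e)) τ, abs_of_pos (inv_pos.2 hr),
      smul_eq_mul]
  rw [hcov, ha, integral_pd_pd_line hΩ hs _ (cos_sin_ne_zero θ), ← ha]
  have h4 := hC s θ
  rw [xray_eq] at h4
  have h5 : y.1 * a.2 - y.2 * a.1 = r * d := by rw [h1, h2, hd]; ring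
  have h6 : -(C * (y.1 * a.2 - y.2 * a.1) ^ 2 / r ^ 3) = r⁻¹ * (d ^ 2 * -C) := by
    rw [h5]; field_simp
  rw [h6]
  gcongr

theorem pd_comp_affine {ψ : ℝ × ℝ → ℝ} (hψ : ContDiff ℝ (⊤ : ℕ∞) ψ) {L : ℝ × ℝ → ℝ × ℝ}
    (hL : ContDiff ℝ (⊤ : ℕ∞) L) {w v : ℝ × ℝ}
    (h : ∀ (ζ : ℝ × ℝ) (s : ℝ), L (ζ + s • w) = L ζ + s • v) :
    pd w (fun ζ => ψ (L ζ)) = fun ζ => pd v ψ (L ζ) := by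
  ext ζ
  refine pd_eq_of_hasDerivAt (ψ := fun ζ => ψ (L ζ)) (hψ.comp hL) ?_
  simp only [h]
  have hγ : HasDerivAt (fun s : ℝ => L ζ + s • v) v 0 := by
    simpa using ((hasDerivAt_id (0 : ℝ)).smul_const v).const_add (L ζ)
  simpa using hasDerivAt_comp_curve hψ hγ

theorem pd_pd_comp_affine {ψ : ℝ × ℝ → ℝ} (hψ : ContDiff ℝ (⊤ : ℕ∞) ψ) {L : ℝ × ℝ → ℝ × ℝ}
    (hL : ContDiff ℝ (⊤ : ℕ∞) L) {w v : ℝ × ℝ}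
    (h : ∀ (ζ : ℝ × ℝ) (s : ℝ), L (ζ + s • w) = L ζ + s • v) (ζ : ℝ × ℝ) :
    pd w (pd w fun ζ => ψ (L ζ)) ζ = pd v (pd v ψ) (L ζ) := by
  rw [pd_comp_affine hψ hL h, pd_comp_affine (contDiff_pd hψ v) hL h]

/-- The smoothed Euclidean norm. -/
def softNorm (ε : ℝ) (p : ℝ × ℝ) : ℝ := √(ε ^ 2 + (p.1 ^ 2 + p.2 ^ 2))

theorem softNorm_pos {ε : ℝ} (hε : 0 < ε) (p : ℝ × ℝ) : 0 < softNorm ε p :=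
  Real.sqrt_pos.2 (by positivity)

theorem softNorm_sq (ε : ℝ) (p : ℝ × ℝ) : softNorm ε p ^ 2 = ε ^ 2 + (p.1 ^ 2 + p.2 ^ 2) :=
  Real.sq_sqrt (by positivity)

theorem contDiff_softNorm {ε : ℝ} (hε : 0 < ε) : ContDiff ℝ (⊤ : ℕ∞) (softNorm ε) :=
  ContDiff.sqrt (contDiff_const.add ((contDiff_fst.pow 2).add (contDiff_snd.pow 2)))
    fun p => by positivity

theorem hasDerivAt_normSq_line (c : ℝ) (p w : ℝ × ℝ) :
    HasDerivAt (fun s : ℝ => c + ((p + s • w).1 ^ 2 + (p + s • w).2 ^ 2))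
      (2 * (p.1 * w.1 + p.2 * w.2)) 0 := by
  have h1 : ∀ x y : ℝ, HasDerivAt (fun s : ℝ => x + s * y) y 0 := fun x y => by
    simpa using ((hasDerivAt_id' (0 : ℝ)).mul_const y).const_add x
  have := (((h1 p.1 w.1).fun_pow 2).fun_add ((h1 p.2 w.2).fun_pow 2)).const_add c
  simp only [Prod.fst_add, Prod.snd_add, Prod.smul_fst, Prod.smul_snd, smul_eq_mul]
  refine this.congr_deriv ?_
  simp
  ring

theorem hasDerivAt_inner_line (p w : ℝ × ℝ) :
    HasDerivAt (fun s : ℝ => (p + s • w).1 * w.1 + (p + s • w).2 * w.2)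
      (w.1 ^ 2 + w.2 ^ 2) 0 := by
  have h1 : ∀ x y : ℝ, HasDerivAt (fun s : ℝ => x + s * y) y 0 := fun x y => by
    simpa using ((hasDerivAt_id' (0 : ℝ)).mul_const y).const_add x
  have := ((h1 p.1 w.1).mul_const w.1).fun_add ((h1 p.2 w.2).mul_const w.2)
  simp only [Prod.fst_add, Prod.snd_add, Prod.smul_fst, Prod.smul_snd, smul_eq_mul]
  exact this.congr_deriv (by ring)

theorem pd_softNorm {ε : ℝ} (hε : 0 < ε) (w : ℝ × ℝ) :
    pd w (softNorm ε) = fun p => (p.1 * w.1 + p.2 * w.2) / softNorm ε p := by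
  ext p
  refine pd_eq_of_hasDerivAt (contDiff_softNorm hε) ?_
  refine ((hasDerivAt_normSq_line (ε ^ 2) p w).sqrt (by positivity)).congr_deriv ?_
  simp [softNorm]
  ring

theorem pd_pd_softNorm {ε : ℝ} (hε : 0 < ε) (w p : ℝ × ℝ) :
    pd w (pd w (softNorm ε)) p = (ε ^ 2 * (w.1 ^ 2 + w.2 ^ 2) + (p.1 * w.2 - p.2 * w.1) ^ 2) /
      softNorm ε p ^ 3 := by
  have hN := softNorm_pos hε p
  have hd : HasDerivAt (fun s : ℝ => softNorm ε (p + s • w))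
      ((p.1 * w.1 + p.2 * w.2) / softNorm ε p) 0 := by
    refine ((hasDerivAt_normSq_line (ε ^ 2) p w).sqrt (by positivity)).congr_deriv ?_
    simp [softNorm]
    ring
  have h1 := (hasDerivAt_inner_line p w).fun_div hd (by simpa using hN.ne')
  have h2 := @pd_eq_of_hasDerivAt _ (contDiff_pd (contDiff_softNorm hε) w) w p
  rw [pd_softNorm hε] at h2 ⊢
  rw [h2 h1]
  have h3 := softNorm_sq ε p
  simp only [zero_smul, add_zero]
  field_simp
  rw [h3]
  ring

/-- A smooth function on the plane with Laplacian concentrated near the origin. -/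
def logBump (R : ℝ) (p : ℝ × ℝ) : ℝ := Real.log (1 + R ^ 2 * (p.1 ^ 2 + p.2 ^ 2))

theorem contDiff_logBump (R : ℝ) : ContDiff ℝ (⊤ : ℕ∞) (logBump R) :=
  ContDiff.log (contDiff_const.add (contDiff_const.mul
    ((contDiff_fst.pow 2).add (contDiff_snd.pow 2)))) fun p => by positivity

theorem pd_pd_logBump (R : ℝ) (w p : ℝ × ℝ) :
    pd w (pd w (logBump R)) p = (2 * R ^ 2 * (w.1 ^ 2 + w.2 ^ 2)) /
        (1 + R ^ 2 * (p.1 ^ 2 + p.2 ^ 2)) - (2 * R ^ 2 * (p.1 * w.1 + p.2 * w.2)) ^ 2 /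
        (1 + R ^ 2 * (p.1 ^ 2 + p.2 ^ 2)) ^ 2 := by
  have hd : ∀ p : ℝ × ℝ, HasDerivAt
      (fun s : ℝ => 1 + R ^ 2 * ((p + s • w).1 ^ 2 + (p + s • w).2 ^ 2))
      (2 * R ^ 2 * (p.1 * w.1 + p.2 * w.2)) 0 := fun p => by
    have := ((hasDerivAt_normSq_line 0 p w).const_mul (R ^ 2)).const_add 1
    simp only [zero_add] at this
    exact this.congr_deriv (by ring)
  have h1 : pd w (logBump R) = fun p => (2 * R ^ 2 * (p.1 * w.1 + p.2 * w.2)) /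
      (1 + R ^ 2 * (p.1 ^ 2 + p.2 ^ 2)) := by
    ext p
    refine pd_eq_of_hasDerivAt (contDiff_logBump R) ?_
    refine ((hd p).log (by positivity)).congr_deriv ?_
    simp
  have h2 := ((hasDerivAt_inner_line p w).const_mul (2 * R ^ 2)).fun_div (hd p) (by positivity)
  have h3 := @pd_eq_of_hasDerivAt _ (contDiff_pd (contDiff_logBump R) w) w p
  rw [h1] at h3 ⊢
  rw [h3 h2]
  have : 0 < 1 + R ^ 2 * (p.1 ^ 2 + p.2 ^ 2) := by positivity
  simp only [zero_smul, add_zero]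
  field_simp

theorem laplacian_logBump (R : ℝ) (p : ℝ × ℝ) :
    pd (1, 0) (pd (1, 0) (logBump R)) p + pd (0, 1) (pd (0, 1) (logBump R)) p =
      4 * R ^ 2 / (1 + R ^ 2 * (p.1 ^ 2 + p.2 ^ 2)) ^ 2 := by
  have : 0 < 1 + R ^ 2 * (p.1 ^ 2 + p.2 ^ 2) := by positivity
  rw [pd_pd_logBump, pd_pd_logBump]
  field_simp
  ring

theorem pd_pd_comb {φ ψ : ℝ × ℝ → ℝ} (hφ : ContDiff ℝ (⊤ : ℕ∞) φ) (hψ : ContDiff ℝ (⊤ : ℕ∞) ψ)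
    (v : ℝ × ℝ) (c d : ℝ) (p : ℝ × ℝ) :
    pd v (pd v fun q => c * φ q + d * ψ q) p = c * pd v (pd v φ) p + d * pd v (pd v ψ) p := by
  have h : (pd v fun q => c * φ q + d * ψ q) = fun p => c * pd v φ p + d * pd v ψ p :=
    funext fun p => pd_comb hφ hψ v c d p
  rw [h, pd_comb (contDiff_pd hφ v) (contDiff_pd hψ v)]

theorem contDiff_pd_param {Φ : (ℝ × ℝ) × ℝ → ℝ} (h : ContDiff ℝ (⊤ : ℕ∞) Φ) (w : ℝ × ℝ) :
    ContDiff ℝ (⊤ : ℕ∞) fun q : (ℝ × ℝ) × ℝ => pd w (fun p => Φ (p, q.2)) q.1 := by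
  have h1 : (fun q : (ℝ × ℝ) × ℝ => pd w (fun p => Φ (p, q.2)) q.1) =
      fun q => fderiv ℝ Φ q (w, 0) := by
    ext ⟨p, t⟩
    have h2 := HasFDerivAt.comp (f := fun e : ℝ × ℝ => (e, t)) p
      (differentiable_of_contDiff_top h (p, t)).hasFDerivAt (hasFDerivAt_prodMk_left p t)
    have h3 : fderiv ℝ (fun p => Φ (p, t)) p =
      (fderiv ℝ Φ (p, t)).comp (ContinuousLinearMap.inl ℝ (ℝ × ℝ) ℝ) := h2.fderiv
    simp [pd, h3]
  rw [h1]
  exact (h.fderiv_right (by simp)).clm_apply contDiff_const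

/-- The real and imaginary parts of an affine complex line `z + (α + iβ)(a + ib)`. -/
def lineRe (x a b ζ : ℝ × ℝ) : ℝ × ℝ := x + (ζ.1 • a - ζ.2 • b)

/-- See `lineRe`. -/
def lineIm (y a b ζ : ℝ × ℝ) : ℝ × ℝ := y + (ζ.2 • a + ζ.1 • b)

theorem contDiff_lineRe (x a b : ℝ × ℝ) : ContDiff ℝ (⊤ : ℕ∞) (lineRe x a b) :=
  contDiff_const.add ((contDiff_fst.smul contDiff_const).sub (contDiff_snd.smul contDiff_const))

theorem contDiff_lineIm (y a b : ℝ × ℝ) : ContDiff ℝ (⊤ : ℕ∞) (lineIm y a b) :=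
  contDiff_const.add ((contDiff_snd.smul contDiff_const).add (contDiff_fst.smul contDiff_const))

/-- The extension of `Ω` along a complex line, with the integral truncated to `[-R, R]`. -/
def truncExt (Ω : ℝ × ℝ → ℝ) (x y a b : ℝ × ℝ) (R : ℝ) (ζ : ℝ × ℝ) : ℝ :=
  ∫ t in (-R)..R, (1 + t ^ 2)⁻¹ * Ω (lineRe x a b ζ + t • lineIm y a b ζ)

theorem contDiff_truncExt_integrand {g : ℝ × ℝ → ℝ} (hg : ContDiff ℝ (⊤ : ℕ∞) g)
    (x y a b : ℝ × ℝ) : ContDiff ℝ (⊤ : ℕ∞) fun q : (ℝ × ℝ) × ℝ =>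
      (1 + q.2 ^ 2)⁻¹ * g (lineRe x a b q.1 + q.2 • lineIm y a b q.1) :=
  (ContDiff.inv (contDiff_const.add (contDiff_snd.pow 2)) fun q => by positivity).mul
    (hg.comp (((contDiff_lineRe x a b).comp contDiff_fst).add
      (contDiff_snd.smul ((contDiff_lineIm y a b).comp contDiff_fst))))

theorem contDiff_truncExt {Ω : ℝ × ℝ → ℝ} (hΩ : ContDiff ℝ (⊤ : ℕ∞) Ω) (x y a b : ℝ × ℝ)
    (R : ℝ) : ContDiff ℝ (⊤ : ℕ∞) (truncExt Ω x y a b R) :=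
  contDiff_intervalIntegral_param (contDiff_truncExt_integrand hΩ x y a b) _ _

theorem pd_pd_truncExt {Ω : ℝ × ℝ → ℝ} (hΩ : ContDiff ℝ (⊤ : ℕ∞) Ω) (x y a b : ℝ × ℝ)
    (R : ℝ) {w : ℝ × ℝ} {v : ℝ → ℝ × ℝ}
    (hv : ∀ t, v t = (w.1 • a - w.2 • b) + t • (w.2 • a + w.1 • b))
    (ζ : ℝ × ℝ) : pd w (pd w (truncExt Ω x y a b R)) ζ = ∫ t in (-R)..R,
      (1 + t ^ 2)⁻¹ * pd (v t) (pd (v t) Ω) (lineRe x a b ζ + t • lineIm y a b ζ) := by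
  have hL : ∀ t : ℝ, ContDiff ℝ (⊤ : ℕ∞) fun ζ => lineRe x a b ζ + t • lineIm y a b ζ := fun t =>
    (contDiff_lineRe x a b).add ((contDiff_lineIm y a b).const_smul t)
  have hw : ∀ (t : ℝ) (ζ : ℝ × ℝ) (s : ℝ), lineRe x a b (ζ + s • w) + t • lineIm y a b (ζ + s • w)
      = lineRe x a b ζ + t • lineIm y a b ζ + s • v t := by
    intro t ζ s
    rw [hv]
    ext <;> simp [lineRe, lineIm] <;> ring
  have hmul : ∀ (c : ℝ) {g : ℝ × ℝ → ℝ}, ContDiff ℝ (⊤ : ℕ∞) g →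
      (pd w fun ζ => c * g ζ) = fun ζ => c * pd w g ζ := by
    intro c g hg
    have := pd_comb hg (contDiff_const (c := (0 : ℝ))) w c 0
    ext p
    simpa using this p
  have h0 := contDiff_truncExt_integrand hΩ x y a b
  have h1 : pd w (truncExt Ω x y a b R) = fun ζ => ∫ t in (-R)..R,
      pd w (fun ζ => (1 + t ^ 2)⁻¹ * Ω (lineRe x a b ζ + t • lineIm y a b ζ)) ζ :=
    funext fun ζ => pd_intervalIntegral h0 (-R) R w ζ
  have h2 : ContDiff ℝ (⊤ : ℕ∞) fun q : (ℝ × ℝ) × ℝ =>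
      pd w (fun ζ => (1 + q.2 ^ 2)⁻¹ * Ω (lineRe x a b ζ + q.2 • lineIm y a b ζ)) q.1 :=
    contDiff_pd_param h0 w
  rw [h1]
  refine (pd_intervalIntegral h2 (-R) R w ζ).trans ?_
  refine intervalIntegral.integral_congr fun t _ => ?_
  simp only
  have h4 : ContDiff ℝ (⊤ : ℕ∞) fun ζ => Ω (lineRe x a b ζ + t • lineIm y a b ζ) := hΩ.comp (hL t)
  have h5 := hmul (1 + t ^ 2)⁻¹ h4
  have h6 := hmul (1 + t ^ 2)⁻¹ (contDiff_pd h4 w)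
  rw [h5, h6]
  simp only
  rw [pd_pd_comp_affine hΩ (hL t) (hw t)]

theorem laplacian_truncExt {Ω : ℝ × ℝ → ℝ} (hΩ : ContDiff ℝ (⊤ : ℕ∞) Ω) (x y a b : ℝ × ℝ)
    (R : ℝ) (ζ : ℝ × ℝ) :
    pd (1, 0) (pd (1, 0) (truncExt Ω x y a b R)) ζ +
      pd (0, 1) (pd (0, 1) (truncExt Ω x y a b R)) ζ =
    ∫ t in (-R)..R, (pd a (pd a Ω) (lineRe x a b ζ + t • lineIm y a b ζ) +
      pd b (pd b Ω) (lineRe x a b ζ + t • lineIm y a b ζ)) := by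
  rw [pd_pd_truncExt hΩ x y a b R (w := (1, 0)) (v := fun t => (1 : ℝ) • a + t • b)
      (fun t => by simp),
    pd_pd_truncExt hΩ x y a b R (w := (0, 1)) (v := fun t => t • a + (-1 : ℝ) • b)
      (fun t => by simp; abel)]
  have hc : ∀ u v : ℝ × ℝ, Continuous fun t : ℝ =>
      pd u (pd v Ω) (lineRe x a b ζ + t • lineIm y a b ζ) := fun u v =>
    (contDiff_pd (contDiff_pd hΩ v) u).continuous.comp (by fun_prop)
  have hi : Continuous fun t : ℝ => (1 + t ^ 2)⁻¹ :=
    Continuous.inv₀ (by fun_prop) fun t => by positivity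
  simp only [pd_pd_dir_comb hΩ]
  rw [← intervalIntegral.integral_add]
  · refine intervalIntegral.integral_congr fun t _ => ?_
    have : (0 : ℝ) < 1 + t ^ 2 := by positivity
    field_simp
    ring
  · exact Continuous.intervalIntegrable (by fun_prop) _ _
  · exact Continuous.intervalIntegrable (by fun_prop) _ _

/-- The regularised restriction of `Eω + σ|y|` to a complex line. -/
def lineReg (Ω : ℝ × ℝ → ℝ) (x y a b p : ℝ × ℝ) (σ K T R : ℝ) (ζ : ℝ × ℝ) : ℝ :=
  (1 / π) * truncExt Ω x y a b R ζ +
    1 * (σ * softNorm (T / R) (lineIm y a b ζ) + (K / R) * logBump R (ζ - p))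

theorem contDiff_lineReg {Ω : ℝ × ℝ → ℝ} (hΩ : ContDiff ℝ (⊤ : ℕ∞) Ω) (x y a b p : ℝ × ℝ)
    (σ K : ℝ) {T R : ℝ} (hT : 0 < T) (hR : 0 < R) :
    ContDiff ℝ (⊤ : ℕ∞) (lineReg Ω x y a b p σ K T R) :=
  (contDiff_const.mul (contDiff_truncExt hΩ x y a b R)).add (contDiff_const.mul
    ((contDiff_const.mul ((contDiff_softNorm (div_pos hT hR)).comp (contDiff_lineIm y a b))).add
      (contDiff_const.mul ((contDiff_logBump R).comp (contDiff_id.sub contDiff_const)))))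

theorem laplacian_lineReg {Ω : ℝ × ℝ → ℝ} (hΩ : ContDiff ℝ (⊤ : ℕ∞) Ω) (x y a b p : ℝ × ℝ)
    (σ K : ℝ) {T R : ℝ} (hT : 0 < T) (hR : 0 < R) (ζ : ℝ × ℝ) :
    pd (1, 0) (pd (1, 0) (lineReg Ω x y a b p σ K T R)) ζ +
      pd (0, 1) (pd (0, 1) (lineReg Ω x y a b p σ K T R)) ζ =
    (1 / π) * (∫ t in (-R)..R, (pd a (pd a Ω) (lineRe x a b ζ + t • lineIm y a b ζ) +
      pd b (pd b Ω) (lineRe x a b ζ + t • lineIm y a b ζ))) +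
    (σ * (pd a (pd a (softNorm (T / R))) (lineIm y a b ζ) +
      pd b (pd b (softNorm (T / R))) (lineIm y a b ζ)) +
    (K / R) * (4 * R ^ 2 / (1 + R ^ 2 * ((ζ - p).1 ^ 2 + (ζ - p).2 ^ 2)) ^ 2)) := by
  have hT1 := contDiff_truncExt hΩ x y a b R
  have hS := contDiff_softNorm (div_pos hT hR)
  have hY := contDiff_lineIm y a b
  have hB := contDiff_logBump R
  have hp : ContDiff ℝ (⊤ : ℕ∞) fun ζ : ℝ × ℝ => ζ - p := contDiff_id.sub contDiff_const
  have hSY : ContDiff ℝ (⊤ : ℕ∞) fun ζ => softNorm (T / R) (lineIm y a b ζ) := hS.comp hY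
  have hBp : ContDiff ℝ (⊤ : ℕ∞) fun ζ => logBump R (ζ - p) := hB.comp hp
  have hsum : ContDiff ℝ (⊤ : ℕ∞) fun ζ =>
      σ * softNorm (T / R) (lineIm y a b ζ) + (K / R) * logBump R (ζ - p) :=
    (contDiff_const.mul hSY).add (contDiff_const.mul hBp)
  have hsub : ∀ (w ζ : ℝ × ℝ) (s : ℝ), ζ + s • w - p = ζ - p + s • w := fun w ζ s => by abel
  have e : lineReg Ω x y a b p σ K T R = fun ζ => (1 / π) * truncExt Ω x y a b R ζ +
    1 * (σ * softNorm (T / R) (lineIm y a b ζ) + (K / R) * logBump R (ζ - p)) := rfl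
  rw [e, pd_pd_comb hT1 hsum, pd_pd_comb hT1 hsum, pd_pd_comb hSY hBp, pd_pd_comb hSY hBp,
    pd_pd_comp_affine hS hY (w := (1, 0)) (v := b) (fun ζ s => by
      ext <;> simp [lineIm] <;> ring),
    pd_pd_comp_affine hS hY (w := (0, 1)) (v := a) (fun ζ s => by
      ext <;> simp [lineIm] <;> ring),
    pd_pd_comp_affine hB hp (hsub (1, 0)), pd_pd_comp_affine hB hp (hsub (0, 1)),
    ← laplacian_truncExt hΩ, ← laplacian_logBump]
  ring

theorem norm_sq_le_sq_add_sq (p : ℝ × ℝ) : ‖p‖ ^ 2 ≤ p.1 ^ 2 + p.2 ^ 2 := by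
  rw [Prod.norm_def]
  rcases max_choice ‖p.1‖ ‖p.2‖ with h | h <;> rw [h, Real.norm_eq_abs, sq_abs]
  · linarith [sq_nonneg p.2]
  · linarith [sq_nonneg p.1]

theorem sq_add_sq_le_norm_sq (p : ℝ × ℝ) : p.1 ^ 2 + p.2 ^ 2 ≤ 2 * ‖p‖ ^ 2 := by
  have h1 : p.1 ^ 2 ≤ ‖p‖ ^ 2 := by
    rw [← sq_abs]; exact pow_le_pow_left₀ (abs_nonneg _) (norm_fst_le p) 2
  have h2 : p.2 ^ 2 ≤ ‖p‖ ^ 2 := by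
    rw [← sq_abs]; exact pow_le_pow_left₀ (abs_nonneg _) (norm_snd_le p) 2
  linarith

theorem pd_pd_softNorm_nonneg {ε : ℝ} (hε : 0 < ε) (w p : ℝ × ℝ) :
    0 ≤ pd w (pd w (softNorm ε)) p := by
  rw [pd_pd_softNorm hε]
  have := softNorm_pos hε p
  positivity

theorem le_pd_pd_softNorm {ε r : ℝ} (hε : 0 < ε) (hr : 0 < r) (w : ℝ × ℝ) {p : ℝ × ℝ}
    (hpr : r ^ 2 = p.1 ^ 2 + p.2 ^ 2) (hεr : ε ≤ r) :
    (p.1 * w.2 - p.2 * w.1) ^ 2 / (8 * r ^ 3) ≤ pd w (pd w (softNorm ε)) p := by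
  have hN := softNorm_pos hε p
  have hN2 : softNorm ε p ≤ 2 * r := by
    refine abs_le_of_sq_le_sq' ?_ (by positivity) |>.2
    rw [softNorm_sq, ← hpr]
    nlinarith
  have hN3 : softNorm ε p ^ 3 ≤ 8 * r ^ 3 := by
    calc softNorm ε p ^ 3 ≤ (2 * r) ^ 3 := by gcongr
      _ = 8 * r ^ 3 := by ring
  rw [pd_pd_softNorm hε]
  refine div_le_div₀ (by positivity) ?_ (by positivity) hN3
  nlinarith [mul_nonneg (sq_nonneg ε) (add_nonneg (sq_nonneg w.1) (sq_nonneg w.2))]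

theorem laplacian_lineReg_nonneg {Ω : ℝ × ℝ → ℝ} (hΩ : ContDiff ℝ (⊤ : ℕ∞) Ω)
    (hs : HasCompactSupport Ω) {C : ℝ} (hC0 : 0 ≤ C) (hC : ∀ s θ : ℝ, -C ≤
      xray (pd (-Real.sin θ, Real.cos θ) (pd (-Real.sin θ, Real.cos θ) Ω)) s θ)
    {x y a b p ζ : ℝ × ℝ} {A D κ M K σ R : ℝ} (hD : ∀ q ∈ tsupport Ω, ‖q‖ < D)
    (hA : ‖lineRe x a b ζ‖ ≤ A) (hT : 0 < A + D)
    (hp : (ζ - p).1 ^ 2 + (ζ - p).2 ^ 2 ≤ κ * ‖lineIm y a b ζ‖ ^ 2) (hκ : 0 ≤ κ)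
    (hM : ∀ q, |pd a (pd a Ω) q + pd b (pd b Ω) q| ≤ M)
    (hK : M * (1 + κ * (A + D) ^ 2) ^ 2 ≤ K) (hσ : 8 * C ≤ σ) (hR : 0 < R) :
    0 ≤ pd (1, 0) (pd (1, 0) (lineReg Ω x y a b p σ K (A + D) R)) ζ +
      pd (0, 1) (pd (0, 1) (lineReg Ω x y a b p σ K (A + D) R)) ζ := by
  rw [laplacian_lineReg hΩ x y a b p σ K hT hR]
  set X := lineRe x a b ζ
  set Y := lineIm y a b ζ
  set T := A + D
  have hσ0 : 0 ≤ σ := by linarith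
  have hM0 : 0 ≤ M := (abs_nonneg _).trans (hM 0)
  have hK0 : 0 ≤ K := le_trans (by positivity) hK
  have hε : 0 < T / R := div_pos hT hR
  have hπ : 1 / π ≤ 1 := by
    rw [div_le_one Real.pi_pos]; linarith [Real.pi_gt_three]
  have hπ0 : 0 ≤ 1 / π := by positivity
  set Q := 1 + R ^ 2 * ((ζ - p).1 ^ 2 + (ζ - p).2 ^ 2) with hQ
  have hQ0 : 0 < Q := by positivity
  by_cases hcase : T / R ≤ ‖Y‖
  · have hYn : 0 < ‖Y‖ := hε.trans_le hcase
    have hr2 : 0 < Y.1 ^ 2 + Y.2 ^ 2 := lt_of_lt_of_le (by positivity) (norm_sq_le_sq_add_sq Y)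
    obtain ⟨r, hr, hYr⟩ : ∃ r : ℝ, 0 < r ∧ r ^ 2 = Y.1 ^ 2 + Y.2 ^ 2 :=
      ⟨_, Real.sqrt_pos.2 hr2, Real.sq_sqrt hr2.le⟩
    have hYr' : ‖Y‖ ≤ r := by
      refine abs_le_of_sq_le_sq' ?_ hr.le |>.2
      rw [hYr]; exact norm_sq_le_sq_add_sq Y
    have hY0 : Y ≠ 0 := norm_pos_iff.1 hYn
    have hTR : T ≤ R * ‖Y‖ := by rwa [div_le_iff₀' hR] at hcase
    have hout : ∀ t : ℝ, R ≤ |t| → X + t • Y ∉ tsupport Ω := fun t ht hq =>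
      (hD _ hq).not_ge (le_norm_add_smul hA (hTR.trans (by gcongr)))
    have hz : ∀ (w : ℝ × ℝ) (t : ℝ), R ≤ |t| → pd w (pd w Ω) (X + t • Y) = 0 := fun w t ht =>
      image_eq_zero_of_notMem_tsupport fun h =>
        hout t ht (tsupport_pd_subset _ _ (tsupport_pd_subset _ _ h))
    have hi : ∀ w : ℝ × ℝ, Integrable fun t : ℝ => pd w (pd w Ω) (X + t • Y) := fun w =>
      integrable_comp_line (contDiff_pd (contDiff_pd hΩ w) w).continuous
        (hasCompactSupport_pd (hasCompactSupport_pd hs w) w) X hY0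
    rw [intervalIntegral_eq_integral_of_eq_zero fun t ht => by rw [hz a t ht, hz b t ht, add_zero],
      integral_add (hi a) (hi b)]
    have la := neg_le_integral_pd_pd hΩ hs hC X a hr hYr
    have lb := neg_le_integral_pd_pd hΩ hs hC X b hr hYr
    have sa := le_pd_pd_softNorm hε hr a hYr (hcase.trans hYr')
    have sb := le_pd_pd_softNorm hε hr b hYr (hcase.trans hYr')
    set I := ∫ t : ℝ, pd a (pd a Ω) (X + t • Y)
    set J := ∫ t : ℝ, pd b (pd b Ω) (X + t • Y)
    set U := (Y.1 * a.2 - Y.2 * a.1) ^ 2 / (8 * r ^ 3) with hU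
    set V := (Y.1 * b.2 - Y.2 * b.1) ^ 2 / (8 * r ^ 3) with hV
    have hU0 : 0 ≤ U := by positivity
    have hV0 : 0 ≤ V := by positivity
    have eU : C * (Y.1 * a.2 - Y.2 * a.1) ^ 2 / r ^ 3 = 8 * C * U := by rw [hU]; field_simp
    have eV : C * (Y.1 * b.2 - Y.2 * b.1) ^ 2 / r ^ 3 = 8 * C * V := by rw [hV]; field_simp
    rw [eU] at la
    rw [eV] at lb
    have h1 : -(8 * C * (U + V)) ≤ (1 / π) * (I + J) := by
      have h2 : (1 / π) * -(8 * C * (U + V)) ≤ (1 / π) * (I + J) := by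
        gcongr; linarith
      have h3 : 0 ≤ 8 * C * (U + V) := by positivity
      linarith [mul_le_mul_of_nonneg_right hπ h3]
    have h4 : 8 * C * (U + V) ≤ σ * (pd a (pd a (softNorm (T / R))) Y +
        pd b (pd b (softNorm (T / R))) Y) := by gcongr
    have h5 : 0 ≤ (K / R) * (4 * R ^ 2 / Q ^ 2) := by positivity
    linarith
  · have hYR : R * ‖Y‖ ≤ T := by
      rw [not_le, lt_div_iff₀ hR] at hcase; linarith
    have hQle : Q ≤ 1 + κ * T ^ 2 := by
      have h1 : (R * ‖Y‖) ^ 2 ≤ T ^ 2 := by gcongr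
      have h2 : κ * (R * ‖Y‖) ^ 2 ≤ κ * T ^ 2 := by gcongr
      have h3 : R ^ 2 * ((ζ - p).1 ^ 2 + (ζ - p).2 ^ 2) ≤ R ^ 2 * (κ * ‖Y‖ ^ 2) := by gcongr
      rw [hQ]
      linarith
    have h1 : -(2 * R * M) ≤ (1 / π) * ∫ t in (-R)..R, (pd a (pd a Ω) (X + t • Y) +
        pd b (pd b Ω) (X + t • Y)) := by
      have h2 := intervalIntegral.norm_integral_le_of_norm_le_const (a := -R) (b := R)
        (f := fun t : ℝ => pd a (pd a Ω) (X + t • Y) + pd b (pd b Ω) (X + t • Y))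
        fun t _ => hM (X + t • Y)
      rw [sub_neg_eq_add, abs_of_pos (by linarith : 0 < R + R), Real.norm_eq_abs] at h2
      have h3 := (abs_le.1 h2).1
      have h4 := mul_le_mul_of_nonneg_left h3 hπ0
      have h5 : 0 ≤ M * (R + R) := by positivity
      linarith [mul_le_mul_of_nonneg_right hπ h5]
    have h6 : M * (4 * R) ≤ (K / R) * (4 * R ^ 2 / Q ^ 2) := by
      have h7 : (K / R) * (4 * R ^ 2 / Q ^ 2) = K * (4 * R) / Q ^ 2 := by field_simp
      rw [h7, le_div_iff₀ (by positivity)]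
      have h8 : M * Q ^ 2 ≤ K := le_trans (by gcongr) hK
      calc M * (4 * R) * Q ^ 2 = M * Q ^ 2 * (4 * R) := by ring
        _ ≤ K * (4 * R) := by gcongr
    have h9 : 0 ≤ σ * (pd a (pd a (softNorm (T / R))) Y + pd b (pd b (softNorm (T / R))) Y) :=
      mul_nonneg hσ0 (add_nonneg (pd_pd_softNorm_nonneg hε _ _) (pd_pd_softNorm_nonneg hε _ _))
    have h10 : 0 ≤ R * M := by positivity
    linarith

theorem integrable_inv_one_add_sq_mul {g : ℝ → ℝ} (hg : Continuous g) {M : ℝ}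
    (hM : ∀ t, |g t| ≤ M) : Integrable fun t : ℝ => (1 + t ^ 2)⁻¹ * g t :=
  (integrable_inv_one_add_sq.mul_const M).mono'
    ((Continuous.inv₀ (by fun_prop) fun t => by positivity).mul hg).aestronglyMeasurable
    (Filter.Eventually.of_forall fun t => by
      have : (0 : ℝ) < 1 + t ^ 2 := by positivity
      rw [norm_mul, Real.norm_of_nonneg (inv_pos.2 this).le, Real.norm_eq_abs]
      gcongr
      exact hM t)

theorem intervalIntegral_le_integral_of_nonneg {f : ℝ → ℝ} (hf : Integrable f) (h0 : ∀ t, 0 ≤ f t)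
    {R : ℝ} (hR : 0 ≤ R) : ∫ t in (-R)..R, f t ≤ ∫ t, f t := by
  rw [intervalIntegral.integral_of_le (by linarith)]
  exact setIntegral_le_integral hf (Filter.Eventually.of_forall h0)

/-- Truncating the Poisson-type integral of a nonpositive function increases it. -/
theorem integral_le_truncated {g : ℝ → ℝ} (hg : Continuous g) {M : ℝ} (hM : ∀ t, |g t| ≤ M)
    (h0 : ∀ t, g t ≤ 0) {R : ℝ} (hR : 0 ≤ R) :
    ∫ t : ℝ, (1 + t ^ 2)⁻¹ * g t ≤ ∫ t in (-R)..R, (1 + t ^ 2)⁻¹ * g t := by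
  have h1 := intervalIntegral_le_integral_of_nonneg
    (integrable_inv_one_add_sq_mul hg hM).neg (fun t => by
      have : (0 : ℝ) < 1 + t ^ 2 := by positivity
      have h2 := mul_nonneg (inv_pos.2 this).le (neg_nonneg.2 (h0 t))
      simpa using h2) hR
  simp only [Pi.neg_apply] at h1
  rw [intervalIntegral.integral_neg, integral_neg] at h1
  linarith

theorem truncated_le_integral {g : ℝ → ℝ} (hg : Continuous g) {M : ℝ} (hM : ∀ t, |g t| ≤ M)
    {R : ℝ} (hR : 0 ≤ R) : ∫ t in (-R)..R, (1 + t ^ 2)⁻¹ * g t ≤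
      (∫ t : ℝ, (1 + t ^ 2)⁻¹ * g t) + M * (π - 2 * Real.arctan R) := by
  have hi := integrable_inv_one_add_sq_mul hg hM
  have hM' := integrable_inv_one_add_sq.mul_const M
  have h1 := intervalIntegral_le_integral_of_nonneg (hi.add hM') (fun t => by
      have : (0 : ℝ) < 1 + t ^ 2 := by positivity
      have h2 := mul_nonneg (inv_pos.2 this).le (by linarith [(abs_le.1 (hM t)).1] : 0 ≤ g t + M)
      simpa [mul_add] using h2) hR
  simp only [Pi.add_apply] at h1
  rw [intervalIntegral.integral_add hi.intervalIntegrable hM'.intervalIntegrable,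
    integral_add hi hM', intervalIntegral.integral_mul_const, integral_mul_const,
    integral_univ_inv_one_add_sq, integral_inv_one_add_sq, Real.arctan_neg] at h1
  linarith

theorem uExt_eq (Ω : ℝ × ℝ → ℝ) (σ : ℝ) (z : ℂ × ℂ) {x y : ℝ × ℝ}
    (hx : x = (z.1.re, z.2.re)) (hy : y = (z.1.im, z.2.im)) :
    uExt Ω σ z = (1 / π) * (∫ t : ℝ, (1 + t ^ 2)⁻¹ * Ω (x + t • y)) +
      σ * √(y.1 ^ 2 + y.2 ^ 2) := by
  subst hx hy
  simp only [uExt]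
  congr 3
  ext t
  rw [div_eq_inv_mul]
  rfl

theorem continuous_uExt {Ω : ℝ × ℝ → ℝ} (hΩ : Continuous Ω) {M : ℝ} (hM : ∀ p, |Ω p| ≤ M)
    (σ : ℝ) : Continuous (uExt Ω σ) := by
  have h1 : Continuous fun z : ℂ × ℂ => ∫ t : ℝ,
      (1 + t ^ 2)⁻¹ * Ω ((z.1.re, z.2.re) + t • (z.1.im, z.2.im)) := by
    refine continuous_of_dominated (bound := fun t => (1 + t ^ 2)⁻¹ * M) (fun z => ?_)
      (fun z => Filter.Eventually.of_forall fun t => ?_) (integrable_inv_one_add_sq.mul_const M)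
      (Filter.Eventually.of_forall fun t => ?_)
    · exact ((Continuous.inv₀ (by fun_prop) fun t => by positivity).mul
        (hΩ.comp (by fun_prop))).aestronglyMeasurable
    · have : (0 : ℝ) < 1 + t ^ 2 := by positivity
      rw [norm_mul, Real.norm_of_nonneg (inv_pos.2 this).le, Real.norm_eq_abs]
      gcongr
      exact hM _
    · exact continuous_const.mul (hΩ.comp (by fun_prop))
  have h2 : uExt Ω σ = fun z => _ := funext fun z => uExt_eq Ω σ z rfl rfl
  rw [h2]
  exact (continuous_const.mul h1).add (continuous_const.mul (by fun_prop))

theorem norm_le_softNorm (ε : ℝ) (p : ℝ × ℝ) : √(p.1 ^ 2 + p.2 ^ 2) ≤ softNorm ε p :=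
  Real.sqrt_le_sqrt (by linarith [sq_nonneg ε])

theorem softNorm_le {ε : ℝ} (hε : 0 ≤ ε) (p : ℝ × ℝ) :
    softNorm ε p ≤ √(p.1 ^ 2 + p.2 ^ 2) + ε := by
  refine Real.sqrt_le_iff.2 ⟨by positivity, ?_⟩
  have h1 := Real.sq_sqrt (by positivity : 0 ≤ p.1 ^ 2 + p.2 ^ 2)
  have h2 := mul_nonneg (Real.sqrt_nonneg (p.1 ^ 2 + p.2 ^ 2)) hε
  nlinarith

theorem logBump_nonneg (R : ℝ) (p : ℝ × ℝ) : 0 ≤ logBump R p :=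
  Real.log_nonneg (by
    linarith [mul_nonneg (sq_nonneg R) (add_nonneg (sq_nonneg p.1) (sq_nonneg p.2))])

theorem logBump_le {R L : ℝ} (hR : 1 ≤ R) {p : ℝ × ℝ} (hp : p.1 ^ 2 + p.2 ^ 2 ≤ L) :
    logBump R p ≤ 2 * Real.log R + Real.log (1 + L) := by
  have hL : 0 ≤ L := le_trans (by positivity) hp
  have h1 : 1 + R ^ 2 * (p.1 ^ 2 + p.2 ^ 2) ≤ R ^ 2 * (1 + L) := by
    have : 1 ≤ R ^ 2 := one_le_pow₀ hR
    have := mul_le_mul_of_nonneg_left hp (sq_nonneg R)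
    linarith
  refine (Real.log_le_log (by positivity) h1).trans (le_of_eq ?_)
  rw [Real.log_mul (by positivity) (by positivity), Real.log_pow]
  norm_num

/-- A nondegenerate complex line meets `ℝ²` in a single point, and the imaginary part controls the
distance to it. -/
theorem exists_lineIm_bound (y : ℝ × ℝ) {a b : ℝ × ℝ} (hab : a.1 * b.2 - a.2 * b.1 ≠ 0) :
    ∃ (p : ℝ × ℝ) (κ : ℝ), 0 ≤ κ ∧ ∀ ζ : ℝ × ℝ,
      (ζ - p).1 ^ 2 + (ζ - p).2 ^ 2 ≤ κ * ‖lineIm y a b ζ‖ ^ 2 := by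
  set d := a.1 * b.2 - a.2 * b.1 with hd
  refine ⟨(-(a.1 * y.2 - a.2 * y.1) / d, -(y.1 * b.2 - y.2 * b.1) / d),
    (a.1 ^ 2 + a.2 ^ 2 + (b.1 ^ 2 + b.2 ^ 2)) * 2 / d ^ 2, by positivity, fun ζ => ?_⟩
  have h1 := sq_add_sq_le_norm_sq (lineIm y a b ζ)
  set Y := lineIm y a b ζ with hY
  have hY1 : Y.1 = y.1 + (ζ.2 * a.1 + ζ.1 * b.1) := rfl
  have hY2 : Y.2 = y.2 + (ζ.2 * a.2 + ζ.1 * b.2) := rfl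
  have e1 : ζ.1 - -(a.1 * y.2 - a.2 * y.1) / d = (a.1 * Y.2 - a.2 * Y.1) / d := by
    rw [hY1, hY2]; field_simp; rw [hd]; ring
  have e2 : ζ.2 - -(y.1 * b.2 - y.2 * b.1) / d = (Y.1 * b.2 - Y.2 * b.1) / d := by
    rw [hY1, hY2]; field_simp; rw [hd]; ring
  have hd2 : 0 < d ^ 2 := by positivity
  simp only [Prod.fst_sub, Prod.snd_sub, e1, e2, div_pow]
  rw [← add_div, div_mul_eq_mul_div]
  refine div_le_div_of_nonneg_right ?_ hd2.le
  have h2 := mul_le_mul_of_nonneg_left h1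
    (by positivity : 0 ≤ a.1 ^ 2 + a.2 ^ 2 + (b.1 ^ 2 + b.2 ^ 2))
  nlinarith [sq_nonneg (a.1 * Y.1 + a.2 * Y.2), sq_nonneg (b.1 * Y.1 + b.2 * Y.2)]

theorem tendsto_error (M T K L σ : ℝ) : Filter.Tendsto (fun R : ℝ =>
    (1 / π) * (M * (π - 2 * Real.arctan R)) +
      (σ * (T / R) + (K / R) * (2 * Real.log R + L))) Filter.atTop (nhds 0) := by
  have h1 : Filter.Tendsto Real.arctan Filter.atTop (nhds (π / 2)) :=
    tendsto_nhds_of_tendsto_nhdsWithin Real.tendsto_arctan_atTop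
  have h2 : Filter.Tendsto (fun R : ℝ => R⁻¹) Filter.atTop (nhds 0) := tendsto_inv_atTop_zero
  have h3 : Filter.Tendsto (fun R : ℝ => Real.log R / R) Filter.atTop (nhds 0) :=
    Real.isLittleO_log_id_atTop.tendsto_div_nhds_zero
  have h4 := (((h1.const_mul 2).const_sub π).const_mul M).const_mul (1 / π)
  have h5 := ((h2.const_mul (σ * T)).add ((h3.const_mul (2 * K)).add (h2.const_mul (K * L))))
  have h6 := h4.add h5
  have e : (1 / π) * (M * (π - 2 * (π / 2))) + (σ * T * 0 + (2 * K * 0 + K * L * 0)) = 0 := by ring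
  rw [e] at h6
  refine h6.congr fun R => ?_
  ring

theorem exists_abs_le_of_hasCompactSupport {ψ : ℝ × ℝ → ℝ} (hc : Continuous ψ)
    (hs : HasCompactSupport ψ) : ∃ M : ℝ, ∀ p, |ψ p| ≤ M :=
  hc.bounded_above_of_compact_support hs

theorem re_im_circle (z v : ℂ × ℂ) (θ : ℝ) :
    lineRe (z.1.re, z.2.re) (v.1.re, v.2.re) (v.1.im, v.2.im) (Real.cos θ, Real.sin θ) =
      ((z + Complex.exp (θ * Complex.I) • v).1.re, (z + Complex.exp (θ * Complex.I) • v).2.re) ∧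
    lineIm (z.1.im, z.2.im) (v.1.re, v.2.re) (v.1.im, v.2.im) (Real.cos θ, Real.sin θ) =
      ((z + Complex.exp (θ * Complex.I) • v).1.im, (z + Complex.exp (θ * Complex.I) • v).2.im) := by
  constructor <;> ext <;>
    simp [lineRe, lineIm, Complex.exp_ofReal_mul_I_re, Complex.exp_ofReal_mul_I_im] <;> ring

theorem uExt_submean_of_det_ne_zero {Ω : ℝ × ℝ → ℝ} (hΩ : ContDiff ℝ (⊤ : ℕ∞) Ω)
    (hs : HasCompactSupport Ω) (hneg : ∀ p, Ω p ≤ 0) {C : ℝ} (hC0 : 0 ≤ C)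
    (hC : ∀ s θ : ℝ, -C ≤
      xray (pd (-Real.sin θ, Real.cos θ) (pd (-Real.sin θ, Real.cos θ) Ω)) s θ)
    {σ : ℝ} (hσ : 8 * C ≤ σ) (z v : ℂ × ℂ) (hv : v.1.re * v.2.im - v.2.re * v.1.im ≠ 0) :
    uExt Ω σ z ≤ (1 / (2 * π)) *
      ∫ θ in (0:ℝ)..(2 * π), uExt Ω σ (z + Complex.exp (θ * Complex.I) • v) := by
  have hσ0 : 0 ≤ σ := by linarith
  obtain ⟨M₀, hM₀⟩ := exists_abs_le_of_hasCompactSupport hΩ.continuous hs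
  have hu := continuous_uExt hΩ.continuous hM₀ σ
  have hcirc := re_im_circle z v
  set x : ℝ × ℝ := (z.1.re, z.2.re) with hx
  set y : ℝ × ℝ := (z.1.im, z.2.im) with hy
  set a : ℝ × ℝ := (v.1.re, v.2.re)
  set b : ℝ × ℝ := (v.1.im, v.2.im)
  obtain ⟨p, κ, hκ, hp⟩ := exists_lineIm_bound y (a := a) (b := b) hv
  obtain ⟨D, hD0, hD⟩ := exists_norm_lt_of_mem_tsupport hs
  have hlap : ∀ w, ContDiff ℝ (⊤ : ℕ∞) (pd w (pd w Ω)) := fun w =>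
    contDiff_pd (contDiff_pd hΩ w) w
  have hlaps : ∀ w, HasCompactSupport (pd w (pd w Ω)) := fun w =>
    hasCompactSupport_pd (hasCompactSupport_pd hs w) w
  obtain ⟨M, hM⟩ := exists_abs_le_of_hasCompactSupport
    ((hlap a).continuous.add (hlap b).continuous) ((hlaps a).add (hlaps b))
  set A := ‖x‖ + (‖a‖ + ‖b‖) with hA
  have hA0 : 0 ≤ A := by positivity
  have hRe : ∀ ζ : ℝ × ℝ, ζ.1 ^ 2 + ζ.2 ^ 2 ≤ 1 → ‖lineRe x a b ζ‖ ≤ A := by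
    intro ζ hζ
    have h1 : |ζ.1| ≤ 1 := (sq_le_one_iff_abs_le_one _).1 (by linarith [sq_nonneg ζ.2])
    have h2 : |ζ.2| ≤ 1 := (sq_le_one_iff_abs_le_one _).1 (by linarith [sq_nonneg ζ.1])
    refine (norm_add_le _ _).trans (add_le_add_right ((norm_sub_le _ _).trans ?_) _)
    rw [norm_smul, norm_smul, Real.norm_eq_abs, Real.norm_eq_abs]
    exact add_le_add (mul_le_of_le_one_left (norm_nonneg _) h1)
      (mul_le_of_le_one_left (norm_nonneg _) h2)
  have hT : 0 < A + D := by positivity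
  set K := M * (1 + κ * (A + D) ^ 2) ^ 2 with hK
  have hM0 : 0 ≤ M := (abs_nonneg _).trans (hM 0)
  have hK0 : 0 ≤ K := by positivity
  have hline : ∀ X Y : ℝ × ℝ, Continuous fun t : ℝ => Ω (X + t • Y) := fun X Y =>
    hΩ.continuous.comp (by fun_prop)
  set L := 2 + 2 * (p.1 ^ 2 + p.2 ^ 2) with hL
  set err : ℝ → ℝ := fun R => (1 / π) * (M₀ * (π - 2 * Real.arctan R)) +
      (σ * ((A + D) / R) + (K / R) * (2 * Real.log R + Real.log (1 + L))) with herr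
  have hπ := Real.pi_pos
  have key : ∀ R : ℝ, 1 ≤ R → 2 * π * uExt Ω σ z ≤
      (∫ θ in (0:ℝ)..(2 * π), uExt Ω σ (z + Complex.exp (θ * Complex.I) • v)) +
        2 * π * err R := by
    intro R hR
    have hR0 : 0 < R := by linarith
    have hF := contDiff_lineReg hΩ x y a b p σ K hT hR0
    have h1 := le_circle_integral_of_laplacian_nonneg hF fun ζ hζ =>
      laplacian_lineReg_nonneg hΩ hs hC0 hC hD (hRe ζ hζ) hT (hp ζ) hκ hM le_rfl hσ hR0
    have h2 : uExt Ω σ z ≤ lineReg Ω x y a b p σ K (A + D) R (0, 0) := by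
      have ex : lineRe x a b (0, 0) = x := by simp [lineRe]
      have ey : lineIm y a b (0, 0) = y := by simp [lineIm]
      rw [uExt_eq Ω σ z hx hy, lineReg, truncExt, ex, ey, one_mul]
      have h3 := integral_le_truncated (hline x y) (fun t => hM₀ _) (fun t => hneg _) hR0.le
      have h4 := norm_le_softNorm ((A + D) / R) y
      have h5 := mul_nonneg (div_nonneg hK0 hR0.le) (logBump_nonneg R ((0, 0) - p))
      have h6 := mul_le_mul_of_nonneg_left h3 (by positivity : 0 ≤ 1 / π)
      have h7 := mul_le_mul_of_nonneg_left h4 hσ0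
      linarith
    have h3 : ∀ θ : ℝ, lineReg Ω x y a b p σ K (A + D) R (Real.cos θ, Real.sin θ) ≤
        uExt Ω σ (z + Complex.exp (θ * Complex.I) • v) + err R := by
      intro θ
      rw [uExt_eq Ω σ _ (hcirc θ).1 (hcirc θ).2, lineReg, truncExt, one_mul, herr]
      set X := lineRe x a b (Real.cos θ, Real.sin θ)
      set Y := lineIm y a b (Real.cos θ, Real.sin θ)
      have h4 := truncated_le_integral (hline X Y) (fun t => hM₀ _) hR0.le
      have h5 := softNorm_le (div_pos hT hR0).le Y
      have h6 : logBump R ((Real.cos θ, Real.sin θ) - p) ≤ 2 * Real.log R + Real.log (1 + L) := by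
        refine logBump_le hR ?_
        simp only [Prod.fst_sub, Prod.snd_sub]
        nlinarith [Real.sin_sq_add_cos_sq θ, sq_nonneg (Real.cos θ + p.1),
          sq_nonneg (Real.sin θ + p.2)]
      have h7 := mul_le_mul_of_nonneg_left h4 (by positivity : 0 ≤ 1 / π)
      have h8 := mul_le_mul_of_nonneg_left h5 hσ0
      have h9 := mul_le_mul_of_nonneg_left h6 (div_nonneg hK0 hR0.le)
      simp only
      linarith
    have hcu : Continuous fun θ : ℝ => uExt Ω σ (z + Complex.exp (θ * Complex.I) • v) :=
      hu.comp (by fun_prop)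
    have hcF : Continuous fun θ : ℝ =>
        lineReg Ω x y a b p σ K (A + D) R (Real.cos θ, Real.sin θ) :=
      hF.continuous.comp (by fun_prop)
    have h4 : ∫ θ in (0:ℝ)..(2 * π), lineReg Ω x y a b p σ K (A + D) R (Real.cos θ, Real.sin θ) ≤
        ∫ θ in (0:ℝ)..(2 * π), (uExt Ω σ (z + Complex.exp (θ * Complex.I) • v) + err R) :=
      intervalIntegral.integral_mono_on (by positivity) (hcF.intervalIntegrable _ _)
        ((hcu.add continuous_const).intervalIntegrable _ _) fun θ _ => h3 θ
    rw [intervalIntegral.integral_add (hcu.intervalIntegrable _ _)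
      (intervalIntegrable_const), intervalIntegral.integral_const, smul_eq_mul,
      sub_zero] at h4
    have h5 := mul_le_mul_of_nonneg_left h2 (by positivity : 0 ≤ 2 * π)
    linarith
  have hlim := (((tendsto_error M₀ (A + D) K (Real.log (1 + L)) σ).const_mul (2 * π)).const_add
    (∫ θ in (0:ℝ)..(2 * π), uExt Ω σ (z + Complex.exp (θ * Complex.I) • v)))
  rw [mul_zero, add_zero] at hlim
  have hfin := ge_of_tendsto hlim (Filter.eventually_atTop.2 ⟨1, key⟩)
  rw [one_div, inv_mul_eq_div, le_div_iff₀ (by positivity)]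
  linarith

theorem psh_uExt {Ω : ℝ × ℝ → ℝ} (hΩ : ContDiff ℝ (⊤ : ℕ∞) Ω)
    (hs : HasCompactSupport Ω) (hneg : ∀ p, Ω p ≤ 0) {C : ℝ} (hC0 : 0 ≤ C)
    (hC : ∀ s θ : ℝ, -C ≤
      xray (pd (-Real.sin θ, Real.cos θ) (pd (-Real.sin θ, Real.cos θ) Ω)) s θ)
    {σ : ℝ} (hσ : 8 * C ≤ σ) : Psh (uExt Ω σ) := by
  intro z v
  obtain ⟨M₀, hM₀⟩ := exists_abs_le_of_hasCompactSupport hΩ.continuous hs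
  have hu := continuous_uExt hΩ.continuous hM₀ σ
  -- perturb `v` to a nondegenerate direction
  set V : ℝ → ℂ × ℂ := fun δ => (v.1 + δ, v.2 + δ * Complex.I) with hV
  have hVc : Continuous V := by fun_prop
  have hI : Continuous fun δ : ℝ => (1 / (2 * π)) *
      ∫ θ in (0:ℝ)..(2 * π), uExt Ω σ (z + Complex.exp (θ * Complex.I) • V δ) := by
    refine continuous_const.mul
      (intervalIntegral.continuous_parametric_intervalIntegral_of_continuous' ?_ _ _)
    exact hu.comp (by fun_prop)
  have hV0 : V 0 = v := by ext <;> simp [hV]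
  have hlim := (hI.tendsto 0).mono_left (nhdsWithin_le_nhds (s := Set.Ioi 0))
  rw [hV0] at hlim
  refine ge_of_tendsto hlim ?_
  set d := v.1.re * v.2.im - v.2.re * v.1.im with hd
  set c := v.1.re + v.2.im with hc
  have hne : ∀ᶠ δ : ℝ in nhdsWithin 0 (Set.Ioi 0), d + δ * (c + δ) ≠ 0 := by
    by_cases hd0 : d = 0
    · by_cases hc0 : c = 0
      · filter_upwards [self_mem_nhdsWithin] with δ hδ
        have : 0 < δ := hδ
        rw [hd0, hc0]
        positivity
      · have : ∀ᶠ δ : ℝ in nhds 0, c + δ ≠ 0 :=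
          (by fun_prop : Continuous fun δ : ℝ => c + δ).continuousAt.eventually_ne
            (by simpa using hc0)
        filter_upwards [self_mem_nhdsWithin, nhdsWithin_le_nhds this] with δ hδ h
        have : 0 < δ := hδ
        rw [hd0, zero_add]
        exact mul_ne_zero this.ne' h
    · have : ∀ᶠ δ : ℝ in nhds 0, d + δ * (c + δ) ≠ 0 :=
        (by fun_prop : Continuous fun δ : ℝ => d + δ * (c + δ)).continuousAt.eventually_ne
          (by simpa using hd0)
      exact nhdsWithin_le_nhds this
  filter_upwards [hne] with δ hδ
  refine uExt_submean_of_det_ne_zero hΩ hs hneg hC0 hC hσ z (V δ) ?_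
  convert hδ using 1
  simp [hV, hd, hc]
  ring

theorem qOf_zero : qOf 0 = 0 := by
  have h : invSq 0 = 0 := by ext p; simp [invSq]
  simp [qOf, h, xray]

/-- If in addition each `θ ↦ T(|x|⁻²ω_k)(0,θ)` is constant (equal to `−q_k`), then
`Eω + σ|y|` is plurisubharmonic for all `σ ≥ σ₀`, where `σ₀` depends only on
`C_reg` and `C_gr`. -/
theorem psh_constant_radial_integrals (Creg Cgr : ℝ) (hCreg : 0 ≤ Creg) (hCgr : 0 ≤ Cgr) :
    ∃ σ₀ : ℝ, 0 ≤ σ₀ ∧ ∀ ω : ℕ → ℝ × ℝ → ℝ,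
      (∀ k, 1 ≤ k → ContDiff ℝ (⊤ : ℕ∞) (ω k)) →
      (∀ k, 1 ≤ k → HasCompactSupport (ω k)) →
      (∀ k, 1 ≤ k → ∀ p, ω k p ≤ 0) →
      (∃ N, ∀ k, N ≤ k → ω k = 0) →
      (∀ k, 1 ≤ k → tsupport (ω k) ⊆ annulus k) →
      (∀ k, 1 ≤ k → KNle (ω k) Creg) →
      (∑' k : ℕ, qOf (ω (k + 1))) ≤ Cgr →
      (∀ k, 1 ≤ k → ∀ θ : ℝ, xray (invSq (ω k)) 0 θ = -qOf (ω k)) →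
      ∀ σ : ℝ, σ₀ ≤ σ → Psh (uExt (fun p => ∑' k : ℕ, ω (k + 1) p) σ) := by
  refine ⟨8 * (Cgr + 1024 * Creg), by positivity, ?_⟩
  rintro ω hsm hcs hneg ⟨N, hN⟩ hsupp hKN hsum hq σ hσ
  have h1 : ∀ k : ℕ, 1 ≤ k + 1 := fun k => Nat.le_add_left 1 k
  have hz : ∀ k ∉ Finset.range N, ω (k + 1) = 0 := fun k hk => hN _ (by
    rw [Finset.mem_range] at hk; omega)
  have hΩ : (fun p => ∑' k : ℕ, ω (k + 1) p) = fun p => ∑ k ∈ Finset.range N, ω (k + 1) p :=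
    funext fun p => tsum_eq_sum fun k hk => by rw [hz k hk]; rfl
  rw [tsum_eq_sum fun k hk => by rw [hz k hk, qOf_zero]] at hsum
  rw [hΩ]
  refine psh_uExt (ContDiff.sum fun k _ => hsm _ (h1 k)) ?_
    (fun p => Finset.sum_nonpos fun k _ => hneg _ (h1 k) p) (by positivity)
    (neg_le_xray_sum (f := fun k => ω (k + 1)) (fun k => hsm _ (h1 k)) (fun k => hcs _ (h1 k))
      (fun k => hneg _ (h1 k)) (fun k => hsupp _ (h1 k)) hCreg (fun k => hKN _ (h1 k))
      (fun k => hq _ (h1 k)) N hsum) hσ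
  clear hsum hΩ hz hN
  induction N with
  | zero =>
    simp only [Finset.sum_range_zero]
    exact HasCompactSupport.zero
  | succ n ih =>
    simp only [Finset.sum_range_succ]
    exact ih.add (hcs _ (h1 n))

end
end

section
/- Let 0 < ρ₀ ≤ ρ₁, ν ∈ (0,1/10), and assume Y ⊂ ℝ is ν-porous on scales ρ₀ to ρ₁. Let I ⊂ ℝ be an interval of length |I| ≤ ρ₁. Then the Lebesgue measure of Y ∩ I satisfies |Y ∩ I| ≤ |I|^δ ρ₀^{1−δ}, where δ := log 2/(log 2 − log(1−ν)) ∈ (0,1). -/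
open MeasureTheory Real

noncomputable section

/-- `Y ⊆ ℝ` is `ν`-porous on scales `ρ₀` to `ρ₁`: every interval of length
`R ∈ [ρ₀, ρ₁]` contains a point `x` with `Y ∩ (x − νR, x + νR) = ∅`. -/
def Porous1 (ν ρ₀ ρ₁ : ℝ) (Y : Set ℝ) : Prop :=
  ∀ a b : ℝ, b - a ∈ Set.Icc ρ₀ ρ₁ →
    ∃ x ∈ Set.Icc a b, Y ∩ Set.Ioo (x - ν * (b - a)) (x + ν * (b - a)) = ∅

/-- The critical exponent `δ = log 2 / (log 2 − log(1−ν))` lies strictly between `0` and `1`. -/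
lemma porosity_exponent_mem_Ioo {ν : ℝ} (hν : ν ∈ Set.Ioo 0 1) :
    Real.log 2 / (Real.log 2 - Real.log (1 - ν)) ∈ Set.Ioo 0 1 := by
  have h2 : 0 < Real.log 2 := Real.log_pos one_lt_two
  have hlog : Real.log (1 - ν) < 0 := Real.log_neg (by linarith [hν.2]) (by linarith [hν.1])
  have hden : 0 < Real.log 2 - Real.log (1 - ν) := by linarith
  exact ⟨div_pos h2 hden, (div_lt_one hden).2 (by linarith)⟩

/-- The defining identity `2 ((1 − ν) / 2) ^ δ = 1` of the critical exponent. -/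
lemma two_mul_rpow_porosity_exponent {ν : ℝ} (hν : ν ∈ Set.Ioo 0 1) :
    2 * ((1 - ν) / 2) ^ (Real.log 2 / (Real.log 2 - Real.log (1 - ν))) = 1 := by
  have h1 : 0 < 1 - ν := by linarith [hν.2]
  have hlog : Real.log (1 - ν) < 0 := Real.log_neg h1 (by linarith [hν.1])
  have h2 : 0 < Real.log 2 := Real.log_pos one_lt_two
  have hden : Real.log 2 - Real.log (1 - ν) ≠ 0 := by linarith
  have hexp : Real.log ((1 - ν) / 2) * (Real.log 2 / (Real.log 2 - Real.log (1 - ν)))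
      = -Real.log 2 := by
    rw [Real.log_div h1.ne' two_ne_zero]
    field_simp
    ring
  rw [Real.rpow_def_of_pos (by positivity), hexp, Real.exp_neg, Real.exp_log two_pos]
  norm_num

/-- Concavity of `t ↦ t ^ δ` at the midpoint. -/
lemma rpow_add_rpow_le_two_mul_rpow {l m δ : ℝ} (hl : 0 ≤ l) (hm : 0 ≤ m) (h0 : 0 ≤ δ)
    (h1 : δ ≤ 1) : l ^ δ + m ^ δ ≤ 2 * ((l + m) / 2) ^ δ := by
  have h := (Real.concaveOn_rpow h0 h1).2 (Set.mem_Ici.2 hl) (Set.mem_Ici.2 hm)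
    (by norm_num : (0 : ℝ) ≤ 1 / 2) (by norm_num : (0 : ℝ) ≤ 1 / 2) (by norm_num)
  simp only [smul_eq_mul] at h
  rw [show 1 / 2 * l + 1 / 2 * m = (l + m) / 2 by ring] at h
  linarith

/-- `t ↦ t ^ δ` is superadditive across a split that loses a proportion `ν` of the length. -/
lemma rpow_add_rpow_le_rpow_porosity_exponent {ν l m R : ℝ} (hν : ν ∈ Set.Ioo 0 1)
    (hl : 0 ≤ l) (hm : 0 ≤ m) (hR : 0 ≤ R) (hlm : l + m ≤ (1 - ν) * R) :
    l ^ (Real.log 2 / (Real.log 2 - Real.log (1 - ν)))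
      + m ^ (Real.log 2 / (Real.log 2 - Real.log (1 - ν)))
      ≤ R ^ (Real.log 2 / (Real.log 2 - Real.log (1 - ν))) := by
  have hδ := porosity_exponent_mem_Ioo hν
  have hone := two_mul_rpow_porosity_exponent hν
  set δ := Real.log 2 / (Real.log 2 - Real.log (1 - ν))
  have h1 : 0 ≤ (1 - ν) / 2 := by linarith [hν.2]
  calc l ^ δ + m ^ δ ≤ 2 * ((l + m) / 2) ^ δ :=
        rpow_add_rpow_le_two_mul_rpow hl hm hδ.1.le hδ.2.le
    _ ≤ 2 * ((1 - ν) / 2 * R) ^ δ := by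
        have := Real.rpow_le_rpow (by positivity) (show (l + m) / 2 ≤ (1 - ν) / 2 * R by linarith)
          hδ.1.le
        linarith
    _ = R ^ δ := by rw [Real.mul_rpow h1 hR, ← mul_assoc, hone, one_mul]

/-- A length below `ρ` is at most its geometric mean with `ρ`. -/
lemma le_rpow_mul_rpow_one_sub {l ρ δ : ℝ} (hl : 0 ≤ l) (hlρ : l ≤ ρ) (h1 : δ ≤ 1) :
    l ≤ l ^ δ * ρ ^ (1 - δ) := by
  calc l = l ^ δ * l ^ (1 - δ) := by
        rw [← Real.rpow_add' hl (by norm_num), add_sub_cancel, Real.rpow_one]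
    _ ≤ l ^ δ * ρ ^ (1 - δ) := by
        have := Real.rpow_le_rpow hl hlρ (sub_nonneg.2 h1)
        gcongr

/-- A porous set meets an interval of admissible length only inside two subintervals
of total length at most `1 − ν` times the original one. -/
lemma Porous1.exists_inter_Icc_subset {ν ρ₀ ρ₁ : ℝ} {Y : Set ℝ} (hY : Porous1 ν ρ₀ ρ₁ Y)
    (hν : ν ∈ Set.Ioo 0 1) {a b : ℝ} (hab : a ≤ b) (hlen : b - a ∈ Set.Icc ρ₀ ρ₁) :
    ∃ c d : ℝ, a ≤ c ∧ d ≤ b ∧ (c - a) + (b - d) ≤ (1 - ν) * (b - a) ∧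
      Y ∩ Set.Icc a b ⊆ (Y ∩ Set.Icc a c) ∪ (Y ∩ Set.Icc d b) := by
  obtain ⟨x, hx, hxY⟩ := hY a b hlen
  have hr : 0 ≤ ν * (b - a) := mul_nonneg hν.1.le (by linarith)
  have hr1 : ν * (b - a) ≤ b - a := mul_le_of_le_one_left (by linarith) hν.2.le
  refine ⟨max a (x - ν * (b - a)), min b (x + ν * (b - a)), le_max_left _ _, min_le_left _ _,
    ?_, ?_⟩
  · rw [sub_mul, one_mul]
    rcases max_cases a (x - ν * (b - a)) with ⟨h, -⟩ | ⟨h, -⟩ <;>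
    rcases min_cases b (x + ν * (b - a)) with ⟨h', -⟩ | ⟨h', -⟩ <;>
    rw [h, h'] <;> linarith [hx.1, hx.2]
  · rintro y ⟨hy, hya, hyb⟩
    by_cases h : y ≤ x - ν * (b - a)
    · exact Or.inl ⟨hy, hya, le_max_of_le_right h⟩
    · by_cases h' : x + ν * (b - a) ≤ y
      · exact Or.inr ⟨hy, min_le_of_right_le h', hyb⟩
      · have : y ∈ Y ∩ Set.Ioo (x - ν * (b - a)) (x + ν * (b - a)) :=
          ⟨hy, not_le.1 h, not_le.1 h'⟩
        simp [hxY] at this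

/-- Measure bound for one-dimensional porous sets:
`|Y ∩ I| ≤ |I|^δ ρ₀^{1−δ}` with `δ = log 2 / (log 2 − log(1−ν))`. -/
theorem porosity_count_1D (ρ₀ ρ₁ ν : ℝ) (hρ₀ : 0 < ρ₀) (hρ : ρ₀ ≤ ρ₁)
    (hν : ν ∈ Set.Ioo 0 (1/10)) (Y : Set ℝ) (hY : Porous1 ν ρ₀ ρ₁ Y)
    (a b : ℝ) (hab : a ≤ b) (hlen : b - a ≤ ρ₁) :
    volume (Y ∩ Set.Icc a b) ≤
      ENNReal.ofReal ((b - a) ^ (Real.log 2 / (Real.log 2 - Real.log (1 - ν))) *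
        ρ₀ ^ (1 - Real.log 2 / (Real.log 2 - Real.log (1 - ν)))) := by
  have hν' : ν ∈ Set.Ioo 0 1 := ⟨hν.1, by linarith [hν.2]⟩
  have hδ := porosity_exponent_mem_Ioo hν'
  have hsplit := @rpow_add_rpow_le_rpow_porosity_exponent ν
  set δ := Real.log 2 / (Real.log 2 - Real.log (1 - ν))
  have hν1 : 0 < 1 - ν := by linarith [hν'.2]
  obtain ⟨n, hn⟩ : ∃ n : ℕ, (1 - ν) ^ n * (b - a) ≤ ρ₀ := by
    obtain ⟨n, hn⟩ := exists_pow_lt_of_lt_one (div_pos hρ₀ (hρ₀.trans_le hρ))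
      (by linarith [hν.1] : 1 - ν < 1)
    refine ⟨n, ?_⟩
    calc (1 - ν) ^ n * (b - a) ≤ (1 - ν) ^ n * ρ₁ := by gcongr
      _ ≤ ρ₀ := ((lt_div_iff₀ (hρ₀.trans_le hρ)).1 hn).le
  have small : ∀ a b : ℝ, a ≤ b → b - a ≤ ρ₀ →
      volume (Y ∩ Set.Icc a b) ≤ ENNReal.ofReal ((b - a) ^ δ * ρ₀ ^ (1 - δ)) := by
    intro a b hab h
    calc volume (Y ∩ Set.Icc a b) ≤ volume (Set.Icc a b) := measure_mono Set.inter_subset_right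
      _ = ENNReal.ofReal (b - a) := Real.volume_Icc
      _ ≤ _ := ENNReal.ofReal_le_ofReal
        (le_rpow_mul_rpow_one_sub (sub_nonneg.2 hab) h hδ.2.le)
  induction n generalizing a b with
  | zero => exact small a b hab (by simpa using hn)
  | succ n ih =>
    rcases le_total (b - a) ρ₀ with h | h
    · exact small a b hab h
    obtain ⟨c, d, hac, hdb, hcd, hsub⟩ := hY.exists_inter_Icc_subset hν' hab ⟨h, hlen⟩
    have hle : (1 - ν) * (b - a) ≤ b - a :=
      mul_le_of_le_one_left (by linarith) (by linarith [hν.1])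
    have hscale : ∀ t, t ≤ (1 - ν) * (b - a) → (1 - ν) ^ n * t ≤ ρ₀ := fun t ht =>
      calc (1 - ν) ^ n * t ≤ (1 - ν) ^ n * ((1 - ν) * (b - a)) := by gcongr
        _ = (1 - ν) ^ (n + 1) * (b - a) := by ring
        _ ≤ ρ₀ := hn
    have hca : 0 ≤ c - a := sub_nonneg.2 hac
    have hbd : 0 ≤ b - d := sub_nonneg.2 hdb
    have hba : 0 ≤ b - a := sub_nonneg.2 hab
    calc volume (Y ∩ Set.Icc a b)
        ≤ volume (Y ∩ Set.Icc a c) + volume (Y ∩ Set.Icc d b) :=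
          (measure_mono hsub).trans (measure_union_le _ _)
      _ ≤ ENNReal.ofReal ((c - a) ^ δ * ρ₀ ^ (1 - δ))
          + ENNReal.ofReal ((b - d) ^ δ * ρ₀ ^ (1 - δ)) :=
          add_le_add (ih a c hac (by linarith) (hscale _ (by linarith)))
            (ih d b hdb (by linarith) (hscale _ (by linarith)))
      _ = ENNReal.ofReal (((c - a) ^ δ + (b - d) ^ δ) * ρ₀ ^ (1 - δ)) := by
          rw [← ENNReal.ofReal_add (by positivity) (by positivity), add_mul]
      _ ≤ ENNReal.ofReal ((b - a) ^ δ * ρ₀ ^ (1 - δ)) := by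
          have := hsplit hν' hca hbd hba hcd
          gcongr

end
end

section
/- Let ν ∈ (0,1/10) and 0 < ρ₀ ≤ ρ₁. There exist constants C > 0 and δ ∈ (0,1) depending only on ν with the following property. Assume 𝐘 ⊂ ℝ² is ν-porous on lines on scales ρ₀ to ρ₁, let ρ₀ ≤ r₀ ≤ r₁ ≤ ρ₁, let τ ⊂ ℝ² be a line segment of length r₁, and let S ⊂ 𝐘 be an r₀-separated set (i.e. |x − x'| > r₀ for all distinct x, x' ∈ S). Then the number of points of S in the neighborhood τ + B(0,2r₀) satisfies #(S ∩ (τ + B(0,2r₀))) ≤ C (r₁/r₀)^δ. -/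
open MeasureTheory Real Pointwise

noncomputable section

/-- `Y ⊆ ℝ²` is `ν`-porous on lines on scales `ρ₀` to `ρ₁`: every line segment of length
`R ∈ [ρ₀, ρ₁]` contains a point `x` with `Y ∩ B(x, νR) = ∅`. -/
def LinePorous (ν ρ₀ ρ₁ : ℝ) (Y : Set (EuclideanSpace ℝ (Fin 2))) : Prop :=
  ∀ a b : EuclideanSpace ℝ (Fin 2), dist a b ∈ Set.Icc ρ₀ ρ₁ →
    ∃ x ∈ segment ℝ a b, Y ∩ Metric.ball x (ν * dist a b) = ∅

/-- Separated subsets of a ball whose radius is a fixed multiple of the separation have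
uniformly bounded cardinality. -/
theorem exists_ncard_le_of_separated {E : Type*} [NormedAddCommGroup E] [NormedSpace ℝ E]
    [ProperSpace E] (K : ℝ) :
    ∃ N : ℕ, ∀ (r : ℝ), 0 < r → ∀ (a : E) (S : Set E), S ⊆ Metric.closedBall a (K * r) →
      (∀ x ∈ S, ∀ x' ∈ S, x ≠ x' → r < dist x x') → S.Finite ∧ S.ncard ≤ N := by
  obtain ⟨t, -, htfin, ht⟩ :=
    finite_cover_balls_of_compact (isCompact_closedBall (0 : E) K) (e := 1 / 2) (by norm_num)
  refine ⟨t.ncard, fun r hr a S hS hsep => ?_⟩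
  have hcover : ∀ x ∈ S, ∃ y ∈ t, dist (r⁻¹ • (x - a)) y < 1 / 2 := by
    intro x hx
    have hxK : r⁻¹ • (x - a) ∈ Metric.closedBall (0 : E) K := by
      have h := hS hx
      rw [Metric.mem_closedBall, dist_eq_norm] at h
      rw [mem_closedBall_zero_iff, norm_smul, norm_inv, Real.norm_of_nonneg hr.le,
        inv_mul_le_iff₀ hr]
      linarith
    simpa using ht hxK
  choose! f hft hf using hcover
  have hinj : Set.InjOn f S := by
    intro x hx y hy hxy
    by_contra hne
    have h1 := hf x hx
    have h2 := hf y hy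
    rw [← hxy, dist_comm] at h2
    have h3 : dist (r⁻¹ • (x - a)) (r⁻¹ • (y - a)) < 1 := by
      have := dist_triangle (r⁻¹ • (x - a)) (f x) (r⁻¹ • (y - a))
      linarith
    rw [dist_smul₀, dist_sub_right, norm_inv, Real.norm_of_nonneg hr.le,
      inv_mul_lt_iff₀ hr] at h3
    linarith [hsep x hx y hy hne]
  exact ⟨htfin.of_injOn hft hinj, Set.ncard_le_ncard_of_injOn f hft hinj htfin⟩

theorem exists_rpow_half_eq_half {κ : ℝ} (h0 : 0 < κ) (h1 : κ < 1) :
    ∃ δ ∈ Set.Ioo (0 : ℝ) 1, (κ / 2) ^ δ = 1 / 2 := by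
  refine ⟨logb (κ / 2) (1 / 2), ⟨?_, ?_⟩, ?_⟩
  · exact logb_pos_of_base_lt_one (by linarith) (by linarith) (by norm_num) (by norm_num)
  · rw [logb_lt_iff_lt_rpow_of_base_lt_one (by linarith) (by linarith) (by norm_num), rpow_one]
    linarith
  · exact rpow_logb (by linarith) (by linarith) (by norm_num)

/-- Subadditivity of `x ↦ x ^ δ` under a proportional loss `κ`, for the exponent with
`(κ / 2) ^ δ = 1 / 2`. -/
theorem rpow_add_rpow_le_of_add_le {κ δ A B M : ℝ} (hκ : 0 ≤ κ) (hδ : δ ∈ Set.Ioo (0 : ℝ) 1)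
    (hκδ : (κ / 2) ^ δ = 1 / 2) (hA : 0 ≤ A) (hB : 0 ≤ B) (hM : 0 ≤ M) (hAB : A + B ≤ κ * M) :
    A ^ δ + B ^ δ ≤ M ^ δ := by
  have h := (Real.concaveOn_rpow hδ.1.le hδ.2.le).2 (Set.mem_Ici.2 hA) (Set.mem_Ici.2 hB)
    (by norm_num : (0 : ℝ) ≤ 1 / 2) (by norm_num : (0 : ℝ) ≤ 1 / 2) (by norm_num)
  simp only [smul_eq_mul] at h
  have h2 : (1 / 2 * A + 1 / 2 * B) ^ δ ≤ (κ / 2 * M) ^ δ :=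
    Real.rpow_le_rpow (by positivity) (by linarith) hδ.1.le
  rw [Real.mul_rpow (by positivity) hM, hκδ] at h2
  linarith

theorem lineMap_mem_segment_lineMap {E : Type*} [AddCommGroup E] [Module ℝ E] (a b : E)
    {u s v : ℝ} (hus : u ≤ s) (hsv : s ≤ v) :
    AffineMap.lineMap a b s ∈ segment ℝ (AffineMap.lineMap a b u) (AffineMap.lineMap a b v) := by
  rw [← image_segment, segment_eq_Icc (hus.trans hsv)]
  exact ⟨s, ⟨hus, hsv⟩, rfl⟩

/-- Away from a hole centred on a segment, the neighborhood of the segment splits into the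
neighborhoods of two subsegments of smaller total length. -/
theorem exists_split_of_hole {E : Type*} [NormedAddCommGroup E] [NormedSpace ℝ E] {ν r : ℝ}
    (hν0 : 0 < ν) (hν1 : ν < 1) {a b x : E} (hr : 8 * r ≤ ν * dist a b)
    (hx : x ∈ segment ℝ a b) {S : Set E} (hS : S ∩ Metric.ball x (ν * dist a b) = ∅) :
    ∃ p q : E, dist a p + dist q b ≤ (1 - ν / 2) * dist a b ∧
      S ∩ (segment ℝ a b + Metric.ball 0 (2 * r)) ⊆
        S ∩ (segment ℝ a p + Metric.ball 0 (2 * r)) ∪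
          S ∩ (segment ℝ q b + Metric.ball 0 (2 * r)) := by
  rw [segment_eq_image_lineMap] at hx
  obtain ⟨t, ⟨ht0, ht1⟩, rfl⟩ := hx
  have hd : 0 ≤ dist a b := dist_nonneg
  refine ⟨AffineMap.lineMap a b (max 0 (t - ν / 2)), AffineMap.lineMap a b (min 1 (t + ν / 2)),
    ?_, ?_⟩
  · rw [dist_left_lineMap, dist_lineMap_right, ← add_mul]
    refine mul_le_mul_of_nonneg_right ?_ hd
    rw [Real.norm_of_nonneg (le_max_left _ _),
      Real.norm_of_nonneg (sub_nonneg.2 (min_le_left _ _))]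
    rcases max_cases 0 (t - ν / 2) with h | h <;> rcases min_cases 1 (t + ν / 2) with h' | h' <;>
      linarith
  · rintro _ ⟨hzS, y, hy, w, hw, rfl⟩
    rw [segment_eq_image_lineMap] at hy
    obtain ⟨s, ⟨hs0, hs1⟩, rfl⟩ := hy
    dsimp only at hzS ⊢
    have hfar : ν * dist a b ≤ dist (AffineMap.lineMap a b s + w) (AffineMap.lineMap a b t) := by
      by_contra! h
      exact Set.eq_empty_iff_forall_notMem.1 hS _ ⟨hzS, h⟩
    have hw' : ‖w‖ < 2 * r := by simpa using hw
    have hst : ν * dist a b < |s - t| * dist a b + 2 * r := by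
      have h := dist_triangle (AffineMap.lineMap a b s + w) (AffineMap.lineMap a b s)
        (AffineMap.lineMap a b t)
      rw [dist_lineMap_lineMap, Real.dist_eq, dist_self_add_left] at h
      linarith
    have hgap : ν / 2 < |s - t| := by
      have : 0 ≤ ‖w‖ := norm_nonneg w
      by_contra! h
      nlinarith [mul_le_mul_of_nonneg_right h hd]
    rcases lt_abs.1 hgap with h | h
    · right
      refine ⟨hzS, Set.add_mem_add ?_ hw⟩
      simpa using lineMap_mem_segment_lineMap a b ((min_le_right 1 (t + ν / 2)).trans
        (by linarith : t + ν / 2 ≤ s)) hs1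
    · left
      refine ⟨hzS, Set.add_mem_add ?_ hw⟩
      simpa using lineMap_mem_segment_lineMap a b hs0
        ((by linarith : s ≤ t - ν / 2).trans (le_max_right 0 (t - ν / 2)))

theorem segment_add_ball_subset_closedBall {E : Type*} [NormedAddCommGroup E] [NormedSpace ℝ E]
    (a b : E) (r : ℝ) :
    segment ℝ a b + Metric.ball 0 r ⊆ Metric.closedBall a (dist a b + r) := by
  rintro _ ⟨y, hy, w, hw, rfl⟩
  have h1 : dist y a ≤ dist a b := by
    have := (convex_closedBall a (dist a b)).segment_subset
      (Metric.mem_closedBall_self dist_nonneg) (by simp [dist_comm]) hy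
    simpa using this
  have hw' : ‖w‖ < r := by simpa using hw
  have h2 := dist_triangle (y + w) y a
  rw [dist_self_add_left] at h2
  simp only [Metric.mem_closedBall]
  linarith

/-- Counting lemma for line porous sets: an `r₀`-separated subset `S` of a line porous
set `Y` has at most `C (r₁/r₀)^δ` points in the `2r₀`-neighborhood of a line segment of
length `r₁`. -/
theorem porosity_count (ν : ℝ) (hν : ν ∈ Set.Ioo 0 (1/10)) :
    ∃ C > (0:ℝ), ∃ δ ∈ Set.Ioo (0:ℝ) 1,
    ∀ ρ₀ ρ₁ : ℝ, 0 < ρ₀ → ρ₀ ≤ ρ₁ →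
    ∀ Y : Set (EuclideanSpace ℝ (Fin 2)), LinePorous ν ρ₀ ρ₁ Y →
    ∀ r₀ r₁ : ℝ, ρ₀ ≤ r₀ → r₀ ≤ r₁ → r₁ ≤ ρ₁ →
    ∀ a b : EuclideanSpace ℝ (Fin 2), dist a b = r₁ →
    ∀ S : Set (EuclideanSpace ℝ (Fin 2)), S ⊆ Y →
      (∀ x ∈ S, ∀ x' ∈ S, x ≠ x' → r₀ < dist x x') →
      (S ∩ (segment ℝ a b + Metric.ball 0 (2 * r₀))).Finite ∧
      ((S ∩ (segment ℝ a b + Metric.ball 0 (2 * r₀))).ncard : ℝ) ≤ C * (r₁ / r₀) ^ δ := by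
  obtain ⟨hν0, hν1⟩ := hν
  obtain ⟨N, hN⟩ := exists_ncard_le_of_separated (E := EuclideanSpace ℝ (Fin 2)) (8 / ν + 2)
  obtain ⟨δ, hδ, hκδ⟩ := exists_rpow_half_eq_half (κ := 1 - ν / 4) (by linarith) (by linarith)
  refine ⟨2 ^ δ * (N + 1), by positivity, δ, hδ, ?_⟩
  intro ρ₀ ρ₁ hρ₀ _ Y hY r₀ r₁ hr₀ hr₀₁ hr₁ a b hab S hSY hsep
  have hr₀pos : 0 < r₀ := hρ₀.trans_le hr₀
  have hshort : ∀ c d : EuclideanSpace ℝ (Fin 2), ν * dist c d ≤ 8 * r₀ →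
      (S ∩ (segment ℝ c d + Metric.ball 0 (2 * r₀))).Finite ∧
      ((S ∩ (segment ℝ c d + Metric.ball 0 (2 * r₀))).ncard : ℝ) ≤
        (N + 1) * (dist c d / r₀ + 1) ^ δ := by
    intro c d hcd
    have hK : dist c d + 2 * r₀ ≤ (8 / ν + 2) * r₀ := by
      have : dist c d ≤ 8 * r₀ / ν := by
        rw [le_div_iff₀ hν0]; linarith
      rw [add_mul, div_mul_eq_mul_div]
      linarith
    obtain ⟨hfin, hcard⟩ := hN r₀ hr₀pos c
      (S ∩ (segment ℝ c d + Metric.ball 0 (2 * r₀)))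
      (Set.inter_subset_right.trans ((segment_add_ball_subset_closedBall c d _).trans
        (Metric.closedBall_subset_closedBall hK)))
      (fun x hx x' hx' => hsep x hx.1 x' hx'.1)
    refine ⟨hfin, ?_⟩
    have hone : (1 : ℝ) ≤ (dist c d / r₀ + 1) ^ δ :=
      Real.one_le_rpow (le_add_of_nonneg_left (by positivity)) hδ.1.le
    have hcard' : ((S ∩ (segment ℝ c d + Metric.ball 0 (2 * r₀))).ncard : ℝ) ≤ N := by
      exact_mod_cast hcard
    have hN0 : (0 : ℝ) ≤ N := N.cast_nonneg
    nlinarith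
  have key : ∀ (n : ℕ) (c d : EuclideanSpace ℝ (Fin 2)), dist c d ≤ r₁ → dist c d ≤ n * r₀ →
      (S ∩ (segment ℝ c d + Metric.ball 0 (2 * r₀))).Finite ∧
      ((S ∩ (segment ℝ c d + Metric.ball 0 (2 * r₀))).ncard : ℝ) ≤
        (N + 1) * (dist c d / r₀ + 1) ^ δ := by
    intro n
    induction n with
    | zero =>
      intro c d _ hcdn
      refine hshort c d ?_
      rw [Nat.cast_zero, zero_mul] at hcdn
      nlinarith
    | succ n ih =>
      intro c d hcd hcdn
      by_cases hlong : ν * dist c d ≤ 8 * r₀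
      · exact hshort c d hlong
      · push Not at hlong
        have hcd0 : 0 ≤ dist c d := dist_nonneg
        obtain ⟨x, hx, hhole⟩ := hY c d ⟨by nlinarith, hcd.trans hr₁⟩
        obtain ⟨p, q, hpq, hsub⟩ := exists_split_of_hole hν0 (by linarith) hlong.le hx
          (Set.subset_empty_iff.1 (hhole ▸ Set.inter_subset_inter_left _ hSY))
        have hp0 : 0 ≤ dist c p := dist_nonneg
        have hq0 : 0 ≤ dist q d := dist_nonneg
        push_cast at hcdn
        obtain ⟨hf1, hc1⟩ := ih c p (by nlinarith) (by nlinarith)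
        obtain ⟨hf2, hc2⟩ := ih q d (by nlinarith) (by nlinarith)
        refine ⟨(hf1.union hf2).subset hsub, ?_⟩
        have hcard := (Set.ncard_le_ncard hsub (hf1.union hf2)).trans (Set.ncard_union_le _ _)
        have hcard' := Nat.cast_le (α := ℝ).2 hcard
        push_cast at hcard'
        have hsum : (dist c p / r₀ + 1) + (dist q d / r₀ + 1) ≤
            (1 - ν / 4) * (dist c d / r₀ + 1) := by
          have h : (dist c p + dist q d + 2 * r₀) / r₀ ≤
              ((1 - ν / 4) * (dist c d + r₀)) / r₀ :=
            div_le_div_of_nonneg_right (by nlinarith) hr₀pos.le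
          convert h using 1
          · field_simp
            ring
          · field_simp
        have hpow := rpow_add_rpow_le_of_add_le (by linarith) hδ hκδ (by positivity)
          (by positivity) (by positivity) hsum
        have hN0 : (0 : ℝ) ≤ N + 1 := by positivity
        nlinarith [mul_le_mul_of_nonneg_left hpow hN0]
  obtain ⟨n, hn⟩ := exists_nat_ge (r₁ / r₀)
  rw [div_le_iff₀ hr₀pos] at hn
  obtain ⟨hfin, hcard⟩ := key n a b hab.le (hab.le.trans hn)
  refine ⟨hfin, hcard.trans ?_⟩
  have hratio : 1 ≤ r₁ / r₀ := (one_le_div hr₀pos).2 hr₀₁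
  have hle : (r₁ / r₀ + 1) ^ δ ≤ 2 ^ δ * (r₁ / r₀) ^ δ := by
    rw [← Real.mul_rpow (by norm_num) (by linarith)]
    exact Real.rpow_le_rpow (by linarith) (by linarith) hδ.1.le
  rw [hab]
  have hN0 : (0 : ℝ) ≤ N + 1 := by positivity
  linarith [mul_le_mul_of_nonneg_left hle hN0]

end
end
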